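/- Let f be a Rademacher random multiplicative function and let ℓ ≥ 2. For each test point x_i with X_{ℓ−1} < x_i ≤ X_ℓ define Y_{x_i} := (1/log x_i) · (log x_i / log X_{ℓ−1})^{1/(ℓ−1)^K} · ∫_{−∞}^{+∞} |S_{x_i}(1/2+it)|² / |1/2+it|² dt, where S_x(1/2+it) := ∏_{p ≤ x, p prime} (1 + f(p)·p^{−1/2−it}), and let 𝓕_i := σ({f(p) : p prime, p ≤ x_i}). Then for all i sufficiently large in terms of ε, Y_{x_i} is 𝓕_i-measurable and integrable, and E[Y_{x_i} | 𝓕_{i−1}] ≥ Y_{x_{i−1}} almost surely; that is, (Y_{x_i}) is a nonnegative submartingale along the test points in (X_{ℓ−1}, X_ℓ]. -/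

import Mathlib

open MeasureTheory ProbabilityTheory

noncomputable section

/-- A Rademacher random multiplicative function. -/
structure IsRademacherRMF {Ω : Type*} [MeasurableSpace Ω] (μ : Measure Ω)
    (f : Ω → ℕ → ℝ) : Prop where
  meas : ∀ n : ℕ, Measurable fun ω => f ω n
  indep : iIndepFun
    (fun (p : Nat.Primes) (ω : Ω) => f ω (p : ℕ)) μ
  prob_one : ∀ p : ℕ, p.Prime → μ {ω | f ω p = 1} = 1 / 2
  prob_neg_one : ∀ p : ℕ, p.Prime → μ {ω | f ω p = -1} = 1 / 2
  eq_zero_of_not_squarefree : ∀ (ω : Ω) (n : ℕ), ¬Squarefree n → f ω n = 0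
  eq_prod_of_squarefree : ∀ (ω : Ω) (n : ℕ), Squarefree n →
    f ω n = ∏ p ∈ n.primeFactors, f ω p

/-- The test points `x_i := ⌊exp(i^ε)⌋`. -/
def testPoint (ε : ℝ) (i : ℕ) : ℕ := ⌊Real.exp ((i : ℝ) ^ ε)⌋₊

/-- `X_ℓ := exp(2^{ℓ^K})` with `K = 1/(4ε)` (here `ℓ` is a real number). -/
def Xpt (ε ℓ : ℝ) : ℝ := Real.exp ((2 : ℝ) ^ (ℓ ^ (1 / (4 * ε))))

/-- The truncated Euler product `S_x(1/2+it) = ∏_{p ≤ x} (1 + f(p) p^{-1/2-it})`. -/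
def eulerProd {Ω : Type*} (f : Ω → ℕ → ℝ) (ω : Ω) (x : ℝ) (t : ℝ) : ℂ :=
  ∏ p ∈ (Finset.Icc 1 ⌊x⌋₊).filter Nat.Prime,
    (1 + (f ω p : ℂ) * (p : ℂ) ^ (-(1 / 2 : ℂ) - (t : ℂ) * Complex.I))

/-- The normalized random variables
`Y_{x_i} = (1/log x_i) (log x_i / log X_{ℓ-1})^{1/(ℓ-1)^K}
  ∫_ℝ |S_{x_i}(1/2+it)|²/|1/2+it|² dt`. -/
def Ynorm {Ω : Type*} (f : Ω → ℕ → ℝ) (ε : ℝ) (ℓ i : ℕ) (ω : Ω) : ℝ :=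
  (1 / Real.log (testPoint ε i)) *
    (Real.log (testPoint ε i) / Real.log (Xpt ε ((ℓ : ℝ) - 1))) ^
      ((1 : ℝ) / ((ℓ : ℝ) - 1) ^ (1 / (4 * ε))) *
    ∫ t : ℝ, ‖eulerProd f ω (testPoint ε i) t‖ ^ 2 /
      ‖(1 / 2 : ℂ) + (t : ℂ) * Complex.I‖ ^ 2

/-- The σ-algebra `𝓕_i` generated by `{f(p) : p prime, p ≤ x_i}`. -/
def sigmaAlgTest {Ω : Type*} (f : Ω → ℕ → ℝ) (ε : ℝ) (i : ℕ) : MeasurableSpace Ω :=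
  ⨆ p ∈ {p : ℕ | p.Prime ∧ p ≤ testPoint ε i},
    MeasurableSpace.comap (fun ω => f ω p) (inferInstance : MeasurableSpace ℝ)

/-!
For a prime `p` that is not yet revealed, `𝔼 |1 + f(p) p ^ (-1/2 - it)|² = 1 + 1/p` for every `t`.
Hence, with `Q_N` the integral of `|S_N|² / |1/2 + it|²`, one has
`𝔼[Q_b | 𝓕_a] = ∏_{a < p ≤ b} (1 + 1/p) * Q_a`, and the submartingale property becomes the
deterministic inequality `(log b / log a) ^ (1 - δ) ≤ ∏_{a < p ≤ b} (1 + 1/p)` for consecutive test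
points `a < b`, where `δ = (ℓ - 1) ^ (-K)`. Since `a > X_{ℓ-1}` says that `δ log log a > log 2`,
the factor `δ log a` beats any constant and absorbs the error terms.

Consecutive test points can be as close as `a / (log a) ^ D` with `D` of order `1/ε`, so the prime
number theorem is needed with error `O(x / (log x) ^ A)` for every `A`. The 3-4-1 inequality and
the polynomial growth of `ζ₁ s = (s - 1) ζ s` give `ζ₁'/ζ₁ ≪ |t| ^ κ` for `Re s ≥ 1 - a |t| ^ (-κ)`,
for any `κ > 0`. By Cauchy's estimates the derivatives of the Mellin transform of the primitive of
`ψ(x) - x` are then integrable on `Re s = 1`, and `N` integrations by parts in the inversion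
formula save `(log x) ^ N`. Monotonicity of `ψ` finally removes the primitive.
-/

open Filter Topology Set

section ZetaGrowth

lemma norm_cpow_neg_sub_cpow_neg_le {m x : ℝ} (hm : 0 < m) (hx : m ≤ x) {s : ℂ}
    (hs : 0 ≤ s.re) :
    ‖(x : ℂ) ^ (-s) - (m : ℂ) ^ (-s)‖ ≤ ‖s‖ * m ^ (-s.re - 1) * (x - m) := by
  have hderiv : ∀ y ∈ Ici m, HasDerivWithinAt (fun y : ℝ ↦ (y : ℂ) ^ (-s))
      (-s * (y : ℂ) ^ (-s - 1)) (Ici m) y := fun y hy ↦ by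
    have := (hasDerivAt_id (y : ℂ)).cpow_const (c := -s) (by simpa using hm.trans_le hy)
    simpa using this.comp_ofReal.hasDerivWithinAt
  have hbound : ∀ y ∈ Ici m, ‖-s * (y : ℂ) ^ (-s - 1)‖ ≤ ‖s‖ * m ^ (-s.re - 1) := fun y hy ↦ by
    rw [norm_mul, norm_neg, Complex.norm_cpow_eq_rpow_re_of_pos (hm.trans_le hy)]
    gcongr
    exact Real.rpow_le_rpow_of_nonpos hm hy (by simp; linarith)
  simpa [abs_of_nonneg (sub_nonneg.2 hx)] using
    (convex_Ici m).norm_image_sub_le_of_norm_hasDerivWithin_le hderiv hbound self_mem_Ici hx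

lemma norm_cpow_neg_sub_cpow_neg_le_rpow {m x : ℝ} (hm : 0 < m) (hx : m ≤ x) (hx' : x ≤ m + 1)
    {s : ℂ} (hs : 0 ≤ s.re) {θ : ℝ} (hθ : 0 ≤ θ) (hθ' : θ ≤ 1) :
    ‖(x : ℂ) ^ (-s) - (m : ℂ) ^ (-s)‖ ≤ 2 * ‖s‖ ^ θ * m ^ (-s.re - θ) := by
  have hrw : 2 * ‖s‖ ^ θ * m ^ (-s.re - θ) = 2 * (‖s‖ / m) ^ θ * m ^ (-s.re) := by
    rw [Real.rpow_sub hm, Real.div_rpow (norm_nonneg s) hm.le]; ring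
  rw [hrw]
  have hpos : 0 < m ^ (-s.re) := by positivity
  rcases le_total 1 (‖s‖ / m) with h | h
  · have htrivial : ‖(x : ℂ) ^ (-s) - (m : ℂ) ^ (-s)‖ ≤ m ^ (-s.re) + m ^ (-s.re) := by
      refine (norm_sub_le _ _).trans ?_
      rw [Complex.norm_cpow_eq_rpow_re_of_pos hm,
        Complex.norm_cpow_eq_rpow_re_of_pos (hm.trans_le hx), Complex.neg_re]
      gcongr ?_ + _
      exact Real.rpow_le_rpow_of_nonpos hm hx (by linarith)
    nlinarith [Real.one_le_rpow h hθ]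
  · have hmvt := norm_cpow_neg_sub_cpow_neg_le hm hx hs
    have hpow : ‖s‖ / m ≤ (‖s‖ / m) ^ θ := by
      simpa using Real.rpow_le_rpow_of_exponent_ge_of_imp (by positivity) h hθ'
        (fun _ h1 ↦ absurd h1 one_ne_zero)
    calc ‖(x : ℂ) ^ (-s) - (m : ℂ) ^ (-s)‖ ≤ ‖s‖ * m ^ (-s.re - 1) * 1 :=
          hmvt.trans (by gcongr; linarith)
      _ = ‖s‖ / m * m ^ (-s.re) := by rw [Real.rpow_sub hm, Real.rpow_one]; ring
      _ ≤ 2 * (‖s‖ / m) ^ θ * m ^ (-s.re) := by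
          gcongr
          linarith [Real.rpow_nonneg (div_nonneg (norm_nonneg s) hm.le) θ]

/-- The terms of the Euler–Maclaurin type series `(s - 1) ζ(s) = 1 + ∑ₙ zetaTerm n s`, which
converges for `Re s > 0`: with `m = n + 1`, the `n`-th term is
`(s - 1) ∫ y in m..m+1, (m ^ (-s) - y ^ (-s))`. -/
def zetaTerm (n : ℕ) (s : ℂ) : ℂ :=
  (s - 1) * ((n + 1 : ℕ) : ℂ) ^ (-s) - ((n + 1 : ℕ) : ℂ) ^ (1 - s) + ((n + 2 : ℕ) : ℂ) ^ (1 - s)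

lemma differentiable_zetaTerm (n : ℕ) : Differentiable ℂ (zetaTerm n) := by
  unfold zetaTerm
  fun_prop (disch := exact Or.inl (Nat.cast_ne_zero.2 (Nat.succ_ne_zero _)))

lemma norm_zetaTerm_le (n : ℕ) {s : ℂ} (hs : 0 ≤ s.re) {θ : ℝ} (hθ : 0 ≤ θ) (hθ' : θ ≤ 1) :
    ‖zetaTerm n s‖ ≤ ‖s - 1‖ * (2 * ‖s‖ ^ θ * ((n + 1 : ℕ) : ℝ) ^ (-s.re - θ)) := by
  have hm : (0 : ℝ) < ((n + 1 : ℕ) : ℝ) := by positivity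
  set m : ℝ := ((n + 1 : ℕ) : ℝ) with hm_def
  have hderiv : ∀ y ∈ Icc m (m + 1), HasDerivWithinAt
      (fun y : ℝ ↦ (s - 1) * (m : ℂ) ^ (-s) * (y : ℂ) + (y : ℂ) ^ (1 - s))
      (-(s - 1) * ((y : ℂ) ^ (-s) - (m : ℂ) ^ (-s))) (Icc m (m + 1)) y := fun y hy ↦ by
    have hpow := (hasDerivAt_id (y : ℂ)).cpow_const (c := 1 - s) (by simpa using hm.trans_le hy.1)
    have hlin := (hasDerivAt_id (y : ℂ)).const_mul ((s - 1) * (m : ℂ) ^ (-s))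
    refine (hlin.add hpow).comp_ofReal.hasDerivWithinAt.congr_deriv ?_
    simp only [id, sub_sub_cancel_left]
    ring
  have hbound : ∀ y ∈ Icc m (m + 1), ‖-(s - 1) * ((y : ℂ) ^ (-s) - (m : ℂ) ^ (-s))‖ ≤
      ‖s - 1‖ * (2 * ‖s‖ ^ θ * m ^ (-s.re - θ)) := fun y hy ↦ by
    rw [norm_mul, norm_neg]
    gcongr
    exact norm_cpow_neg_sub_cpow_neg_le_rpow hm hy.1 hy.2 hs hθ hθ'
  have hmvt := (convex_Icc m (m + 1)).norm_image_sub_le_of_norm_hasDerivWithin_le hderiv hbound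
    (left_mem_Icc.2 (by linarith)) (right_mem_Icc.2 (by linarith))
  have hterm : zetaTerm n s = (s - 1) * (m : ℂ) ^ (-s) * ((m + 1 : ℝ) : ℂ) +
      ((m + 1 : ℝ) : ℂ) ^ (1 - s) - ((s - 1) * (m : ℂ) ^ (-s) * (m : ℂ) + (m : ℂ) ^ (1 - s)) := by
    rw [zetaTerm, hm_def]
    push_cast
    ring_nf
  simpa [hterm] using hmvt

lemma summable_succ_rpow_neg {p : ℝ} (hp : 1 < p) :
    Summable fun n : ℕ ↦ ((n + 1 : ℕ) : ℝ) ^ (-p) :=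
  (summable_nat_add_iff 1).2 (Real.summable_nat_rpow.2 (neg_lt_neg hp))

lemma summable_zetaTerm {s : ℂ} (hs : 0 < s.re) : Summable fun n ↦ zetaTerm n s := by
  refine .of_norm_bounded (((summable_succ_rpow_neg (p := s.re + 1) (by linarith)).mul_left
    (2 * ‖s‖ ^ (1 : ℝ))).mul_left ‖s - 1‖) fun n ↦ ?_
  simpa only [neg_add'] using norm_zetaTerm_le n hs.le zero_le_one le_rfl

lemma sum_range_zetaTerm (s : ℂ) (N : ℕ) :
    ∑ n ∈ Finset.range N, zetaTerm n s =
      (s - 1) * ∑ n ∈ Finset.range N, 1 / ((n : ℂ) + 1) ^ s + ((N + 1 : ℕ) : ℂ) ^ (1 - s) - 1 := by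
  induction N with
  | zero => simp
  | succ N ih =>
    rw [Finset.sum_range_succ, Finset.sum_range_succ, ih, zetaTerm, Complex.cpow_neg]
    push_cast
    ring_nf

lemma riemannZeta₁_eq_sub_one_mul {s : ℂ} (hs : s ≠ 1) :
    riemannZeta₁ s = (s - 1) * riemannZeta s := by
  rw [riemannZeta_eq_inv_sub_mul hs, mul_inv_cancel_left₀ (sub_ne_zero.2 hs)]

lemma riemannZeta₁_ne_zero {s : ℂ} (hs : 1 ≤ s.re) : riemannZeta₁ s ≠ 0 := by
  rcases eq_or_ne s 1 with rfl | h
  · simp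
  · rw [riemannZeta₁_eq_sub_one_mul h]
    exact mul_ne_zero (sub_ne_zero.2 h) (riemannZeta_ne_zero_of_one_le_re hs)

lemma riemannZeta₁_eq_tsum_of_one_lt_re {s : ℂ} (hs : 1 < s.re) :
    riemannZeta₁ s = 1 + ∑' n, zetaTerm n s := by
  have hpartial := (summable_zetaTerm (zero_lt_one.trans hs)).hasSum.tendsto_sum_nat
  have hzeta : HasSum (fun n : ℕ ↦ 1 / ((n : ℂ) + 1) ^ s) (riemannZeta s) := by
    rw [zeta_eq_tsum_one_div_nat_add_one_cpow hs]
    simpa using ((summable_nat_add_iff 1).2 (Complex.summable_one_div_nat_cpow.2 hs)).hasSum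
  have hpow : Tendsto (fun N : ℕ ↦ ((N + 1 : ℕ) : ℂ) ^ (1 - s)) atTop (𝓝 0) := by
    rw [tendsto_zero_iff_norm_tendsto_zero]
    refine (((tendsto_rpow_neg_atTop (sub_pos.2 hs)).comp tendsto_natCast_atTop_atTop).comp
      (tendsto_add_atTop_nat 1)).congr fun N ↦ ?_
    rw [Complex.norm_natCast_cpow_of_pos N.succ_pos]
    simp
  have hlimit := ((hzeta.tendsto_sum_nat.const_mul (s - 1)).add hpow).sub_const 1
  simp only [← sum_range_zetaTerm] at hlimit
  rw [tendsto_nhds_unique hpartial hlimit, riemannZeta₁_eq_sub_one_mul (by rintro rfl; simp at hs)]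
  ring

lemma differentiableOn_tsum_zetaTerm {δ R : ℝ} (hδ : 0 < δ) :
    DifferentiableOn ℂ (fun s ↦ ∑' n, zetaTerm n s) ({s | δ < s.re} ∩ Metric.ball 0 R) := by
  refine Complex.differentiableOn_tsum_of_summable_norm
    (((summable_succ_rpow_neg (p := δ + 1) (by linarith)).mul_left (2 * R)).mul_left (R + 1))
    (fun n ↦ (differentiable_zetaTerm n).differentiableOn)
    ((isOpen_lt continuous_const Complex.continuous_re).inter Metric.isOpen_ball) ?_
  rintro n s ⟨hs : δ < s.re, hR⟩
  rw [mem_ball_zero_iff] at hR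
  refine (norm_zetaTerm_le n (hδ.trans hs).le zero_le_one le_rfl).trans ?_
  have hsub : ‖s - 1‖ ≤ R + 1 := (norm_sub_le _ _).trans (by simpa using hR.le)
  have hR₀ : 0 ≤ R := (norm_nonneg s).trans hR.le
  rw [Real.rpow_one, neg_add']
  gcongr
  · simp

lemma riemannZeta₁_eq_tsum {s : ℂ} (hs : 0 < s.re) :
    riemannZeta₁ s = 1 + ∑' n, zetaTerm n s := by
  have hδ : 0 < min (s.re / 2) 1 := by positivity
  set U : Set ℂ := {z | min (s.re / 2) 1 < z.re} ∩ Metric.ball 0 (‖s‖ + 3)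
  have hU_open : IsOpen U :=
    (isOpen_lt continuous_const Complex.continuous_re).inter Metric.isOpen_ball
  have hU_convex : Convex ℝ U := (convex_halfSpace_re_gt _).inter (convex_ball _ _)
  have htwo : (2 : ℂ) ∈ U :=
    ⟨(min_le_right _ _).trans_lt (by norm_num : (1 : ℝ) < (2 : ℂ).re), by
      rw [mem_ball_zero_iff, Complex.norm_ofNat]; linarith [norm_nonneg s]⟩
  have hsU : s ∈ U := ⟨(min_le_left _ _).trans_lt (half_lt_self hs), by
    rw [mem_ball_zero_iff]; linarith⟩
  have heq : riemannZeta₁ =ᶠ[𝓝 2] fun z ↦ 1 + ∑' n, zetaTerm n z := by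
    filter_upwards [(isOpen_lt continuous_const Complex.continuous_re).mem_nhds
      (show (1 : ℝ) < (2 : ℂ).re by norm_num)] with z hz using riemannZeta₁_eq_tsum_of_one_lt_re hz
  exact AnalyticOnNhd.eqOn_of_preconnected_of_eventuallyEq
    (differentiable_riemannZeta₁.differentiableOn.analyticOnNhd hU_open)
    (((differentiableOn_tsum_zetaTerm hδ).const_add 1).analyticOnNhd hU_open)
    hU_convex.isPreconnected htwo heq hsU

lemma exists_norm_riemannZeta₁_le_add {θ : ℝ} (hθ : 0 < θ) (hθ' : θ ≤ 1) :
    ∃ C > 0, ∀ s : ℂ, 1 - θ / 2 ≤ s.re → ‖riemannZeta₁ s‖ ≤ 1 + C * ‖s - 1‖ * ‖s‖ ^ θ := by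
  have hsum := summable_succ_rpow_neg (p := 1 + θ / 2) (by linarith)
  refine ⟨2 * ∑' n : ℕ, ((n + 1 : ℕ) : ℝ) ^ (-(1 + θ / 2)),
    mul_pos two_pos (hsum.tsum_pos (fun n ↦ by positivity) 0 (by positivity)), fun s hs ↦ ?_⟩
  have hterm : ∀ n, ‖zetaTerm n s‖ ≤
      (2 * ‖s - 1‖ * ‖s‖ ^ θ) * ((n + 1 : ℕ) : ℝ) ^ (-(1 + θ / 2)) := fun n ↦ by
    calc ‖zetaTerm n s‖ ≤ ‖s - 1‖ * (2 * ‖s‖ ^ θ * ((n + 1 : ℕ) : ℝ) ^ (-s.re - θ)) :=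
          norm_zetaTerm_le n (by linarith) hθ.le hθ'
      _ ≤ ‖s - 1‖ * (2 * ‖s‖ ^ θ * ((n + 1 : ℕ) : ℝ) ^ (-(1 + θ / 2))) := by
          gcongr
          · simp
          · linarith
      _ = _ := by ring
  have htsum := tsum_of_norm_bounded (hsum.mul_left _).hasSum hterm
  rw [tsum_mul_left] at htsum
  rw [riemannZeta₁_eq_tsum (by linarith)]
  refine (norm_add_le _ _).trans ?_
  rw [norm_one]
  linarith

lemma exists_norm_riemannZeta₁_le {θ : ℝ} (hθ : 0 < θ) (hθ' : θ ≤ 1) :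
    ∃ C > 0, ∀ s : ℂ, 1 - θ / 2 ≤ s.re → s.re ≤ 3 →
      ‖riemannZeta₁ s‖ ≤ C * (1 + |s.im|) ^ (1 + θ) := by
  obtain ⟨C, hC, hbound⟩ := exists_norm_riemannZeta₁_le_add hθ hθ'
  refine ⟨1 + C * 4 ^ (1 + θ), by positivity, fun s h₁ h₂ ↦ (hbound s h₁).trans ?_⟩
  have hs : ‖s‖ ≤ 4 * (1 + |s.im|) := by
    have := Complex.norm_le_abs_re_add_abs_im s
    rw [abs_of_nonneg (by linarith)] at this
    linarith [abs_nonneg s.im]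
  have hs' : ‖s - 1‖ ≤ 4 * (1 + |s.im|) := by
    have := Complex.norm_le_abs_re_add_abs_im (s - 1)
    have hre : |(s - 1).re| ≤ 2 := abs_le.2 ⟨by simp; linarith, by simp; linarith⟩
    simp only [Complex.sub_im, Complex.one_im, sub_zero] at this
    linarith [abs_nonneg s.im]
  have hone : 1 ≤ (1 + |s.im|) ^ (1 + θ) :=
    Real.one_le_rpow (by linarith [abs_nonneg s.im]) (by linarith)
  calc 1 + C * ‖s - 1‖ * ‖s‖ ^ θ
      ≤ 1 + C * (4 * (1 + |s.im|)) * (4 * (1 + |s.im|)) ^ θ := by gcongr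
    _ = 1 + C * (4 * (1 + |s.im|)) ^ (1 + θ) := by
        rw [Real.rpow_add (by positivity), Real.rpow_one]; ring
    _ = 1 + C * 4 ^ (1 + θ) * (1 + |s.im|) ^ (1 + θ) := by
        rw [Real.mul_rpow (by norm_num) (by positivity)]; ring
    _ ≤ (1 + C * 4 ^ (1 + θ)) * (1 + |s.im|) ^ (1 + θ) := by linarith

lemma abs_im_le_add_of_mem_closedBall {s z : ℂ} {r : ℝ} (hz : z ∈ Metric.closedBall s r) :
    |z.im| ≤ |s.im| + r := by
  have h := (Complex.abs_im_le_norm (z - s)).trans (mem_closedBall_iff_norm.1 hz)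
  rw [Complex.sub_im] at h
  linarith [abs_sub_abs_le_abs_sub z.im s.im]

lemma abs_re_sub_re_le_of_mem_closedBall {s z : ℂ} {r : ℝ} (hz : z ∈ Metric.closedBall s r) :
    |z.re - s.re| ≤ r :=
  (Complex.abs_re_le_norm (z - s)).trans (mem_closedBall_iff_norm.1 hz)

lemma exists_norm_deriv_riemannZeta₁_le {θ : ℝ} (hθ : 0 < θ) (hθ' : θ ≤ 1) :
    ∃ C > 0, ∀ s : ℂ, 1 - θ / 4 ≤ s.re → s.re ≤ 2 →
      ‖deriv riemannZeta₁ s‖ ≤ C * (1 + |s.im|) ^ (1 + θ) := by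
  obtain ⟨C, hC, hbound⟩ := exists_norm_riemannZeta₁_le hθ hθ'
  refine ⟨C * 2 ^ (1 + θ) / (θ / 4), by positivity, fun s h₁ h₂ ↦ ?_⟩
  have hsphere : ∀ z ∈ Metric.sphere s (θ / 4),
      ‖riemannZeta₁ z‖ ≤ C * 2 ^ (1 + θ) * (1 + |s.im|) ^ (1 + θ) := fun z hz ↦ by
    have hz' := Metric.sphere_subset_closedBall hz
    obtain ⟨hre, hre'⟩ := abs_le.1 (abs_re_sub_re_le_of_mem_closedBall hz')
    have him := abs_im_le_add_of_mem_closedBall hz'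
    calc ‖riemannZeta₁ z‖ ≤ C * (1 + |z.im|) ^ (1 + θ) := hbound z (by linarith) (by linarith)
      _ ≤ C * (2 * (1 + |s.im|)) ^ (1 + θ) := by
          gcongr
          linarith [abs_nonneg s.im]
      _ = _ := by rw [Real.mul_rpow two_pos.le (by positivity), mul_assoc]
  refine (Complex.norm_deriv_le_of_forall_mem_sphere_norm_le (by positivity)
    differentiable_riemannZeta₁.diffContOnCl hsphere).trans_eq ?_
  ring

end ZetaGrowth

section ZeroFreeRegion

lemma sub_one_pow_mul_le_norm_riemannZeta₁_product {x : ℝ} (hx : 0 < x) (y : ℝ) :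
    x ^ 3 * |y| ^ 4 * (2 * |y|) ≤ ‖riemannZeta₁ (1 + x)‖ ^ 3 *
      ‖riemannZeta₁ (1 + x + Complex.I * y)‖ ^ 4 * ‖riemannZeta₁ (1 + x + 2 * Complex.I * y)‖ := by
  have hproduct := DirichletCharacter.norm_LFunction_product_ge_one (N := 1) 1 hx y
  simp only [DirichletCharacter.LFunctionTrivChar, DirichletCharacter.LFunction_modOne_eq,
    one_pow] at hproduct
  have hne : ∀ z : ℂ, z.re = 0 → 1 + (x : ℂ) + z ≠ 1 := fun z hz h ↦ by
    have := congrArg Complex.re h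
    simp only [Complex.add_re, Complex.one_re, Complex.ofReal_re, hz] at this
    linarith
  have hrw : ∀ z : ℂ, z.re = 0 →
      ‖riemannZeta₁ (1 + x + z)‖ = ‖x + z‖ * ‖riemannZeta (1 + x + z)‖ := fun z hz ↦ by
    rw [riemannZeta₁_eq_sub_one_mul (hne z hz), norm_mul, add_assoc, add_sub_cancel_left]
  have h₁ := hrw 0 rfl
  simp only [add_zero, Complex.norm_real, Real.norm_of_nonneg hx.le] at h₁
  rw [h₁, hrw (Complex.I * y) (by simp), hrw (2 * Complex.I * y) (by simp)]
  have h₂ : |y| ≤ ‖(x : ℂ) + Complex.I * y‖ := by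
    simpa using Complex.abs_im_le_norm ((x : ℂ) + Complex.I * y)
  have h₃ : 2 * |y| ≤ ‖(x : ℂ) + 2 * Complex.I * y‖ := by
    simpa [abs_mul] using Complex.abs_im_le_norm ((x : ℂ) + 2 * Complex.I * y)
  simp only [norm_mul, norm_pow] at hproduct
  calc x ^ 3 * |y| ^ 4 * (2 * |y|)
      ≤ x ^ 3 * ‖(x : ℂ) + Complex.I * y‖ ^ 4 * ‖(x : ℂ) + 2 * Complex.I * y‖ := by gcongr
    _ ≤ x ^ 3 * ‖(x : ℂ) + Complex.I * y‖ ^ 4 * ‖(x : ℂ) + 2 * Complex.I * y‖ * _ :=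
        le_mul_of_one_le_right (by positivity) hproduct
    _ = _ := by ring

lemma one_add_abs_two_mul_rpow_le {θ : ℝ} (hθ : 0 ≤ θ) (hθ' : θ ≤ 1) (y : ℝ) :
    (1 + |2 * y|) ^ (1 + θ) ≤ 4 * ((1 + |y|) * (1 + |y|) ^ θ) := by
  calc (1 + |2 * y|) ^ (1 + θ) ≤ (2 * (1 + |y|)) ^ (1 + θ) := by
        gcongr
        rw [abs_mul, abs_two]
        linarith
    _ = 2 ^ (1 + θ) * ((1 + |y|) * (1 + |y|) ^ θ) := by
        rw [Real.mul_rpow two_pos.le (by positivity), Real.rpow_add (x := 1 + |y|) (by positivity),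
          Real.rpow_one]
    _ ≤ 4 * ((1 + |y|) * (1 + |y|) ^ θ) := by
        gcongr
        calc (2 : ℝ) ^ (1 + θ) ≤ 2 ^ (2 : ℝ) := by gcongr <;> linarith
          _ = 4 := by norm_num

lemma exists_mul_le_norm_riemannZeta₁_pow_of_one_le_abs_im {θ : ℝ} (hθ : 0 < θ) (hθ' : θ ≤ 1) :
    ∃ c > 0, ∀ s : ℂ, 1 < s.re → s.re ≤ 2 → 1 ≤ |s.im| →
      c * (s.re - 1) ^ 3 * (1 + |s.im|) ^ 4 ≤ ‖riemannZeta₁ s‖ ^ 4 * (1 + |s.im|) ^ θ := by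
  obtain ⟨C, hC, hbound⟩ := exists_norm_riemannZeta₁_le hθ hθ'
  refine ⟨1 / (64 * C ^ 4), by positivity, fun s h₁ h₂ hs ↦ ?_⟩
  set u := 1 + |s.im|
  have hproduct := sub_one_pow_mul_le_norm_riemannZeta₁_product (sub_pos.2 h₁) s.im
  have hs_eq : 1 + ((s.re - 1 : ℝ) : ℂ) + Complex.I * s.im = s := by
    apply Complex.ext <;> simp
  rw [hs_eq] at hproduct
  have hreal : ‖riemannZeta₁ (1 + ((s.re - 1 : ℝ) : ℂ))‖ ≤ C := by
    simpa using hbound (1 + ((s.re - 1 : ℝ) : ℂ)) (by simp; linarith) (by simp; linarith)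
  have hdouble : ‖riemannZeta₁ (1 + ((s.re - 1 : ℝ) : ℂ) + 2 * Complex.I * s.im)‖ ≤
      C * (4 * (u * u ^ θ)) := by
    calc _ ≤ C * (1 + |2 * s.im|) ^ (1 + θ) := by
          simpa using hbound (1 + ((s.re - 1 : ℝ) : ℂ) + 2 * Complex.I * s.im)
            (by simp; linarith) (by simp; linarith)
      _ ≤ C * (4 * (u * u ^ θ)) := by gcongr; exact one_add_abs_two_mul_rpow_le hθ.le hθ' s.im
  have hlower : (s.re - 1) ^ 3 * (u / 2) ^ 4 * u ≤
      C ^ 3 * ‖riemannZeta₁ s‖ ^ 4 * (C * (4 * (u * u ^ θ))) := by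
    calc (s.re - 1) ^ 3 * (u / 2) ^ 4 * u ≤ (s.re - 1) ^ 3 * |s.im| ^ 4 * (2 * |s.im|) := by
          have : 0 ≤ s.re - 1 := by linarith
          gcongr <;> linarith
      _ ≤ _ := hproduct.trans (by gcongr)
  have hu_pos : 0 < u := by positivity
  refine le_of_mul_le_mul_right ?_ (show 0 < 4 * C ^ 4 * u by positivity)
  calc _ = (s.re - 1) ^ 3 * (u / 2) ^ 4 * u := by field_simp; ring
    _ ≤ _ := hlower
    _ = _ := by ring

lemma exists_mul_le_norm_riemannZeta₁_pow {θ : ℝ} (hθ : 0 < θ) (hθ' : θ ≤ 1) :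
    ∃ c > 0, ∀ s : ℂ, 1 < s.re → s.re ≤ 2 →
      c * (s.re - 1) ^ 3 * (1 + |s.im|) ^ 4 ≤ ‖riemannZeta₁ s‖ ^ 4 * (1 + |s.im|) ^ θ := by
  obtain ⟨c, hc, hlarge⟩ := exists_mul_le_norm_riemannZeta₁_pow_of_one_le_abs_im hθ hθ'
  obtain ⟨m, hm, hsmall⟩ := (isCompact_Icc.reProdIm isCompact_Icc :
    IsCompact (Icc (1 : ℝ) 2 ×ℂ Icc (-1) 1)).exists_forall_le'
      differentiable_riemannZeta₁.continuous.norm.continuousOn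
      (fun s hs ↦ norm_pos_iff.2 (riemannZeta₁_ne_zero hs.1.1))
  refine ⟨min c (m ^ 4 / 16), by positivity, fun s h₁ h₂ ↦ ?_⟩
  have : 0 ≤ s.re - 1 := by linarith
  rcases le_total 1 |s.im| with hs | hs
  · exact le_trans (by gcongr; exact min_le_left _ _) (hlarge s h₁ h₂ hs)
  · have hu : 1 ≤ 1 + |s.im| := by linarith [abs_nonneg s.im]
    calc min c (m ^ 4 / 16) * (s.re - 1) ^ 3 * (1 + |s.im|) ^ 4
        ≤ m ^ 4 / 16 * 1 ^ 3 * 2 ^ 4 := by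
          gcongr
          · exact min_le_right _ _
          · linarith
          · linarith
      _ = m ^ 4 * 1 := by ring
      _ ≤ ‖riemannZeta₁ s‖ ^ 4 * (1 + |s.im|) ^ θ := by
          gcongr
          · exact hsmall s ⟨⟨h₁.le, h₂⟩, abs_le.1 hs⟩
          · exact Real.one_le_rpow hu hθ.le

lemma norm_riemannZeta₁_sub_le_of_im_eq {s w : ℂ} {D α : ℝ} (him : w.im = s.im)
    (hs : s.re ∈ Icc α 2) (hw : w.re ∈ Icc α 2)
    (hD : ∀ z : ℂ, α ≤ z.re → z.re ≤ 2 → z.im = s.im → ‖deriv riemannZeta₁ z‖ ≤ D) :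
    ‖riemannZeta₁ w - riemannZeta₁ s‖ ≤ D * |w.re - s.re| := by
  have hconvex : Convex ℝ (Complex.reLm ⁻¹' Icc α 2 ∩ Complex.imLm ⁻¹' {s.im}) :=
    ((convex_Icc _ _).linear_preimage _).inter ((convex_singleton _).linear_preimage _)
  have hmvt := hconvex.norm_image_sub_le_of_norm_deriv_le (x := s) (y := w)
    (fun z _ ↦ differentiable_riemannZeta₁.differentiableAt)
    (fun z hz ↦ hD z hz.1.1 hz.1.2 hz.2) ⟨hs, rfl⟩ ⟨hw, him⟩
  rwa [← Complex.abs_re_eq_norm.2 (show (w - s).im = 0 by simp [him]), Complex.sub_re] at hmvt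

lemma rpow_one_sub_four_mul {u : ℝ} (hu : 0 < u) (θ : ℝ) :
    u ^ (1 - 4 * θ) = u / (u ^ θ) ^ 4 := by
  rw [Real.rpow_sub hu, Real.rpow_one, ← Real.rpow_mul_natCast hu.le, mul_comm θ, Nat.cast_ofNat]

lemma rpow_neg_five_mul {u : ℝ} (hu : 0 < u) (θ : ℝ) : u ^ (-(5 * θ)) = 1 / (u ^ θ) ^ 5 := by
  rw [← Real.rpow_mul_natCast hu.le, mul_comm θ, Nat.cast_ofNat, one_div, ← Real.rpow_neg hu.le]

lemma mul_rpow_le_of_mul_pow_le {a c D u x y θ : ℝ} (ha : 0 < a) (hD : 0 < D) (hu : 0 < u)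
    (hy : 0 ≤ y) (hac : (3 * D) ^ 4 * a ≤ c) (hx : a * u ^ (-(5 * θ)) ≤ x)
    (hxy : c * x ^ 3 * u ^ 4 ≤ y ^ 4 * u ^ θ) : 3 * a * D * u ^ (1 - 4 * θ) ≤ y := by
  refine le_of_pow_le_pow_left₀ four_ne_zero hy
    (le_of_mul_le_mul_right ?_ (show 0 < u ^ θ by positivity))
  calc (3 * a * D * u ^ (1 - 4 * θ)) ^ 4 * u ^ θ
      = (3 * D) ^ 4 * a * (a * u ^ (-(5 * θ))) ^ 3 * u ^ 4 := by
        rw [rpow_one_sub_four_mul hu, rpow_neg_five_mul hu]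
        field_simp
    _ ≤ c * x ^ 3 * u ^ 4 := by
        have : 0 ≤ c := le_trans (by positivity) hac
        gcongr
    _ ≤ y ^ 4 * u ^ θ := hxy

lemma exists_mul_le_norm_riemannZeta₁ {θ : ℝ} (hθ : 0 < θ) (hθ' : θ ≤ 1) :
    ∃ a > 0, a ≤ θ / 4 ∧ ∃ c > 0, ∀ s : ℂ, 1 - a * (1 + |s.im|) ^ (-(5 * θ)) ≤ s.re → s.re ≤ 2 →
      c * (1 + |s.im|) ^ (1 - 4 * θ) ≤ ‖riemannZeta₁ s‖ := by
  obtain ⟨D, hD, hderiv⟩ := exists_norm_deriv_riemannZeta₁_le hθ hθ'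
  obtain ⟨c, hc, hlower⟩ := exists_mul_le_norm_riemannZeta₁_pow hθ hθ'
  refine ⟨min (c / (3 * D) ^ 4) (θ / 4), by positivity, min_le_right _ _, _,
    mul_pos (show 0 < min (c / (3 * D) ^ 4) (θ / 4) by positivity) hD, fun s h₁ h₂ ↦ ?_⟩
  set a := min (c / (3 * D) ^ 4) (θ / 4)
  set u := 1 + |s.im|
  have ha : 0 < a := by positivity
  have ha_c : (3 * D) ^ 4 * a ≤ c := (le_div_iff₀' (by positivity)).1 (min_le_left _ _)
  have ha_θ : a ≤ θ / 4 := min_le_right _ _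
  have hu : 1 ≤ u := by simp [u]
  set x₀ := a * u ^ (-(5 * θ))
  have hx₀ : 0 < x₀ := by positivity
  have hx₀_le : x₀ ≤ a :=
    mul_le_of_le_one_right ha.le (Real.rpow_le_one_of_one_le_of_nonpos hu (by linarith))
  set w : ℂ := ⟨max s.re (1 + x₀), s.im⟩
  have hw : 1 + x₀ ≤ w.re := le_max_right _ _
  have hw₂ : w.re ≤ 2 := max_le h₂ (by linarith)
  have hright : 3 * a * D * u ^ (1 - 4 * θ) ≤ ‖riemannZeta₁ w‖ :=
    mul_rpow_le_of_mul_pow_le ha hD (by positivity) (norm_nonneg _) ha_c (by linarith)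
      (hlower w (by linarith) hw₂)
  have hdist : |w.re - s.re| ≤ 2 * x₀ := by
    rw [abs_of_nonneg (sub_nonneg.2 (le_max_left _ _)), sub_le_iff_le_add]
    exact max_le (by linarith) (by linarith)
  have hsub : ‖riemannZeta₁ w - riemannZeta₁ s‖ ≤ 2 * a * D * u ^ (1 - 4 * θ) := by
    calc ‖riemannZeta₁ w - riemannZeta₁ s‖ ≤ D * u ^ (1 + θ) * |w.re - s.re| :=
          norm_riemannZeta₁_sub_le_of_im_eq (α := 1 - θ / 4) rfl ⟨by linarith, h₂⟩
            ⟨by linarith, hw₂⟩ fun z hz hz' him ↦ by simpa [him] using hderiv z hz hz'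
      _ ≤ D * u ^ (1 + θ) * (2 * x₀) := by gcongr
      _ = 2 * a * D * u ^ (1 - 4 * θ) := by
        rw [Real.rpow_one_add' (by positivity) (by positivity),
          rpow_one_sub_four_mul (by positivity), show x₀ = a * _ from rfl,
          rpow_neg_five_mul (by positivity)]
        field_simp
  have htriangle := norm_sub_norm_le (riemannZeta₁ w) (riemannZeta₁ s)
  linarith

lemma exists_norm_logDeriv_riemannZeta₁_le {κ : ℝ} (hκ : 0 < κ) (hκ' : κ ≤ 1) :
    ∃ a > 0, a ≤ 1 / 4 ∧ ∃ M > 0, ∀ s : ℂ, 1 - a * (1 + |s.im|) ^ (-κ) ≤ s.re → s.re ≤ 2 →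
      riemannZeta₁ s ≠ 0 ∧ ‖logDeriv riemannZeta₁ s‖ ≤ M * (1 + |s.im|) ^ κ := by
  obtain ⟨D, hD, hderiv⟩ := exists_norm_deriv_riemannZeta₁_le (θ := κ / 5) (by linarith)
    (by linarith)
  obtain ⟨a, ha, ha', c, hc, hlower⟩ := exists_mul_le_norm_riemannZeta₁ (θ := κ / 5) (by linarith)
    (by linarith)
  rw [mul_div_cancel₀ κ (by norm_num)] at hlower
  refine ⟨a, ha, by linarith, D / c, by positivity, fun s h₁ h₂ ↦ ?_⟩
  have hu : 1 ≤ 1 + |s.im| := by simp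
  set u := 1 + |s.im|
  have hs := hlower s h₁ h₂
  have hpos : 0 < ‖riemannZeta₁ s‖ := lt_of_lt_of_le (by positivity) hs
  have hre : 1 - κ / 5 / 4 ≤ s.re := by
    have : a * u ^ (-κ) ≤ a :=
      mul_le_of_le_one_right ha.le (Real.rpow_le_one_of_one_le_of_nonpos hu (by linarith))
    linarith
  refine ⟨norm_pos_iff.1 hpos, ?_⟩
  rw [logDeriv_apply, norm_div, div_le_iff₀ hpos]
  calc ‖deriv riemannZeta₁ s‖ ≤ D * u ^ (1 + κ / 5) := hderiv s hre h₂
    _ = D * u ^ (κ + (1 - 4 * (κ / 5))) := by ring_nf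
    _ = D / c * u ^ κ * (c * u ^ (1 - 4 * (κ / 5))) := by
        rw [Real.rpow_add (by positivity)]; field_simp
    _ ≤ D / c * u ^ κ * ‖riemannZeta₁ s‖ := by gcongr

end ZeroFreeRegion

section FourierDecay

lemma analyticAt_logDeriv_riemannZeta₁ {s : ℂ} (hs : riemannZeta₁ s ≠ 0) :
    AnalyticAt ℂ (logDeriv riemannZeta₁) s :=
  have h := differentiable_riemannZeta₁.analyticAt s
  h.deriv.div h hs

/-- The function `((ζ₁'/ζ₁)(s) + 1) / (s (s + 1))` with `ζ₁(s) = (s - 1) ζ(s)`. Up to sign it is the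
Mellin transform `∫ x in 1..∞, E(x) x ^ (-s - 2)` of the primitive `E` of `ψ(x) - x`. -/
def psiErrorTransform (s : ℂ) : ℂ := (logDeriv riemannZeta₁ s + 1) / (s * (s + 1))

lemma analyticAt_psiErrorTransform {s : ℂ} (hs : 1 ≤ s.re) :
    AnalyticAt ℂ psiErrorTransform s := by
  have h₀ : s ≠ 0 := by rintro rfl; norm_num at hs
  have h₁ : s + 1 ≠ 0 := fun h ↦ by
    have := congrArg Complex.re h
    simp only [Complex.add_re, Complex.one_re, Complex.zero_re] at this
    linarith
  exact ((analyticAt_logDeriv_riemannZeta₁ (riemannZeta₁_ne_zero hs)).add analyticAt_const).div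
    (by fun_prop) (mul_ne_zero h₀ h₁)

lemma sq_one_add_abs_im_le {s : ℂ} (hs : 3 / 4 ≤ s.re) :
    (1 + |s.im|) ^ 2 ≤ 9 * ‖s * (s + 1)‖ := by
  have h₁ := Complex.abs_im_le_norm s
  have h₂ := Complex.re_le_norm s
  have h₃ : |s.im| ≤ ‖s + 1‖ := by simpa using Complex.abs_im_le_norm (s + 1)
  have h₄ : s.re + 1 ≤ ‖s + 1‖ := by simpa using Complex.re_le_norm (s + 1)
  calc (1 + |s.im|) ^ 2 = (1 + |s.im|) * (1 + |s.im|) := sq _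
    _ ≤ (3 * ‖s‖) * (3 * ‖s + 1‖) := by gcongr <;> linarith
    _ = 9 * ‖s * (s + 1)‖ := by rw [norm_mul]; ring

lemma exists_norm_psiErrorTransform_le {κ : ℝ} (hκ : 0 < κ) (hκ' : κ ≤ 1) :
    ∃ a > 0, a ≤ 1 / 4 ∧ ∃ M > 0, ∀ s : ℂ, 1 - a * (1 + |s.im|) ^ (-κ) ≤ s.re → s.re ≤ 2 →
      DifferentiableAt ℂ psiErrorTransform s ∧
        ‖psiErrorTransform s‖ ≤ M * (1 + |s.im|) ^ (κ - 2) := by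
  obtain ⟨a, ha, ha', M, hM, hlog⟩ := exists_norm_logDeriv_riemannZeta₁_le hκ hκ'
  refine ⟨a, ha, ha', 9 * (M + 1), by positivity, fun s h₁ h₂ ↦ ?_⟩
  obtain ⟨hne, hbound⟩ := hlog s h₁ h₂
  have hu : 1 ≤ 1 + |s.im| := by simp
  set u := 1 + |s.im| with hu_def
  have hre : 3 / 4 ≤ s.re := by
    have : a * u ^ (-κ) ≤ a :=
      mul_le_of_le_one_right ha.le (Real.rpow_le_one_of_one_le_of_nonpos hu (by linarith))
    linarith
  have hsq := sq_one_add_abs_im_le hre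
  rw [← hu_def] at hsq
  have hpos : 0 < ‖s * (s + 1)‖ := by nlinarith
  refine ⟨((analyticAt_logDeriv_riemannZeta₁ hne).differentiableAt.add_const 1).div (by fun_prop)
    (norm_pos_iff.1 hpos), ?_⟩
  have hpow : 1 ≤ u ^ κ := Real.one_le_rpow hu hκ.le
  rw [psiErrorTransform, norm_div, div_le_iff₀ hpos]
  calc ‖logDeriv riemannZeta₁ s + 1‖ ≤ M * u ^ κ + 1 :=
        (norm_add_le _ _).trans (by rw [norm_one]; linarith)
    _ ≤ (M + 1) * u ^ (κ - 2) * u ^ 2 := by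
        rw [mul_assoc, ← Real.rpow_natCast, ← Real.rpow_add (by positivity), Nat.cast_ofNat,
          sub_add_cancel]
        linarith
    _ ≤ (M + 1) * u ^ (κ - 2) * (9 * ‖s * (s + 1)‖) := by gcongr
    _ = _ := by ring

lemma le_re_of_mem_closedBall {a κ : ℝ} (ha : 0 < a) (ha' : a ≤ 1 / 4) (hκ : 0 ≤ κ) (hκ' : κ ≤ 1)
    {s z : ℂ} (hs : 1 ≤ s.re) (hz : z ∈ Metric.closedBall s (a / 2 * (1 + |s.im|) ^ (-κ))) :
    1 - a * (1 + |z.im|) ^ (-κ) ≤ z.re := by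
  have hu : 1 ≤ 1 + |s.im| := by simp
  have hpow : (1 + |s.im|) ^ (-κ) ≤ 1 := Real.rpow_le_one_of_one_le_of_nonpos hu (by linarith)
  have hre := (abs_le.1 (abs_re_sub_re_le_of_mem_closedBall hz)).1
  have him : 1 + |z.im| ≤ 2 * (1 + |s.im|) := by
    have := abs_im_le_add_of_mem_closedBall hz
    have : a / 2 * (1 + |s.im|) ^ (-κ) ≤ 1 / 8 * 1 :=
      mul_le_mul (by linarith) hpow (by positivity) (by norm_num)
    linarith
  have hcompare : 1 / 2 * (1 + |s.im|) ^ (-κ) ≤ (1 + |z.im|) ^ (-κ) := by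
    calc 1 / 2 * (1 + |s.im|) ^ (-κ) = 2 ^ (-1 : ℝ) * (1 + |s.im|) ^ (-κ) := by
          rw [Real.rpow_neg_one, one_div]
      _ ≤ 2 ^ (-κ) * (1 + |s.im|) ^ (-κ) := by gcongr; norm_num
      _ = (2 * (1 + |s.im|)) ^ (-κ) := (Real.mul_rpow two_pos.le (by positivity)).symm
      _ ≤ (1 + |z.im|) ^ (-κ) :=
          Real.rpow_le_rpow_of_nonpos (by positivity) him (neg_nonpos.2 hκ)
  linarith [mul_le_mul_of_nonneg_left hcompare ha.le]

lemma rpow_sub_two_le_four_mul {u v κ : ℝ} (hu : 0 < u) (huv : u / 2 ≤ v) (hκ : 0 ≤ κ)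
    (hκ' : κ ≤ 2) : v ^ (κ - 2) ≤ 4 * u ^ (κ - 2) := by
  calc v ^ (κ - 2) ≤ (u / 2) ^ (κ - 2) :=
        Real.rpow_le_rpow_of_nonpos (by positivity) huv (by linarith)
    _ = 2 ^ (2 - κ) * u ^ (κ - 2) := by
        rw [Real.div_rpow hu.le two_pos.le, ← neg_sub 2 κ, Real.rpow_neg two_pos.le, div_inv_eq_mul,
          mul_comm]
    _ ≤ 2 ^ (2 : ℝ) * u ^ (κ - 2) := by
        gcongr
        · exact one_le_two
        · linarith
    _ = 4 * u ^ (κ - 2) := by norm_num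

lemma exists_norm_psiErrorTransform_le_of_mem_closedBall {κ : ℝ} (hκ : 0 < κ) (hκ' : κ ≤ 1) :
    ∃ a > 0, ∃ M, ∀ s : ℂ, 1 ≤ s.re → s.re ≤ 3 / 2 →
      ∀ z ∈ Metric.closedBall s (a * (1 + |s.im|) ^ (-κ)),
        DifferentiableAt ℂ psiErrorTransform z ∧
          ‖psiErrorTransform z‖ ≤ M * (1 + |s.im|) ^ (κ - 2) := by
  obtain ⟨a, ha, ha', M, hM, hbound⟩ := exists_norm_psiErrorTransform_le hκ hκ'
  refine ⟨a / 2, by positivity, M * 4, fun s h₁ h₂ z hz ↦ ?_⟩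
  have hu : 1 ≤ 1 + |s.im| := by simp
  have hradius : a / 2 * (1 + |s.im|) ^ (-κ) ≤ 1 / 2 :=
    (mul_le_of_le_one_right (by positivity)
      (Real.rpow_le_one_of_one_le_of_nonpos hu (by linarith))).trans (by linarith)
  have hre := (abs_le.1 (abs_re_sub_re_le_of_mem_closedBall hz)).2
  have him := abs_im_le_add_of_mem_closedBall (Metric.mem_closedBall_comm.1 hz)
  obtain ⟨hdiff, hle⟩ :=
    hbound z (le_re_of_mem_closedBall ha ha' hκ.le hκ' h₁ hz) (by linarith)
  refine ⟨hdiff, hle.trans ?_⟩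
  rw [mul_assoc]
  gcongr
  exact rpow_sub_two_le_four_mul (by positivity) (by linarith) hκ.le (by linarith)

lemma exists_norm_iteratedDeriv_psiErrorTransform_le (n : ℕ) :
    ∃ C, ∀ s : ℂ, 1 ≤ s.re → s.re ≤ 3 / 2 →
      ‖iteratedDeriv n psiErrorTransform s‖ ≤ C * (1 + |s.im|) ^ (-(3 / 2) : ℝ) := by
  set κ : ℝ := 1 / (2 * (n + 1)) with hκ
  have hκ_le : κ ≤ 1 := by
    rw [hκ, div_le_one (by positivity)]
    linarith [(Nat.cast_nonneg n : (0 : ℝ) ≤ n)]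
  obtain ⟨a, ha, M, hball⟩ :=
    exists_norm_psiErrorTransform_le_of_mem_closedBall (κ := κ) (by positivity) hκ_le
  refine ⟨n.factorial * M / a ^ n, fun s h₁ h₂ ↦ ?_⟩
  have hu : 0 < 1 + |s.im| := by positivity
  set u := 1 + |s.im|
  have hcauchy := Complex.norm_iteratedDeriv_le_of_forall_mem_sphere_norm_le n
    (show 0 < a * u ^ (-κ) by positivity)
    (DifferentiableOn.diffContOnCl_ball (U := Metric.closedBall s (a * u ^ (-κ)))
      (fun z hz ↦ (hball s h₁ h₂ z hz).1.differentiableWithinAt) subset_rfl)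
    (fun z hz ↦ (hball s h₁ h₂ z (Metric.sphere_subset_closedBall hz)).2)
  refine hcauchy.trans_eq ?_
  have hexponent : u ^ (κ - 2) / (u ^ (-κ)) ^ n = u ^ (-(3 / 2) : ℝ) := by
    rw [← Real.rpow_mul_natCast hu.le, ← Real.rpow_sub hu]
    congr 1
    rw [hκ]
    field_simp
    ring
  rw [← hexponent, mul_pow]
  ring

lemma iteratedDeriv_comp_line {h : ℂ → ℂ} {z₀ w : ℂ} (hh : ∀ y : ℝ, AnalyticAt ℂ h (z₀ + y * w))
    (n : ℕ) : iteratedDeriv n (fun y : ℝ ↦ h (z₀ + y * w)) =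
      fun y : ℝ ↦ w ^ n * iteratedDeriv n h (z₀ + y * w) := by
  induction n with
  | zero => simp
  | succ n ih =>
    rw [iteratedDeriv_succ, ih]
    ext y
    have hline : HasDerivAt (fun y : ℝ ↦ z₀ + y * w) w y := by
      simpa using ((hasDerivAt_id (y : ℂ)).comp_ofReal.mul_const w).const_add z₀
    have hderiv : HasDerivAt (iteratedDeriv n h) (iteratedDeriv (n + 1) h (z₀ + y * w))
        (z₀ + y * w) := by
      rw [iteratedDeriv_succ]
      refine DifferentiableAt.hasDerivAt ?_
      rw [iteratedDeriv_eq_iterate]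
      exact ((hh y).iterated_deriv n).differentiableAt
    refine ((hderiv.comp y hline).const_mul (w ^ n)).deriv.trans ?_
    ring

lemma norm_mellinInv_mul_pow_log_le {k : ℂ → ℂ} {σ x : ℝ} (hx : 1 < x) {N : ℕ}
    (hsmooth : ContDiff ℝ N fun y : ℝ ↦ k (σ + 2 * Real.pi * y * Complex.I))
    (hint : ∀ n ≤ N, Integrable
      (iteratedDeriv n fun y : ℝ ↦ k (σ + 2 * Real.pi * y * Complex.I))) :
    ‖mellinInv σ k x‖ * (2 * Real.pi * Real.log x) ^ N ≤ x ^ (-σ) *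
      ∫ y, ‖iteratedDeriv N (fun y : ℝ ↦ k (σ + 2 * Real.pi * y * Complex.I)) y‖ := by
  set g := fun y : ℝ ↦ k (σ + 2 * Real.pi * y * Complex.I)
  have hx₀ : 0 < x := by linarith
  have hlog : 0 ≤ Real.log x := Real.log_nonneg hx.le
  have hfourier := congrFun (Real.fourier_iteratedDeriv (N := N) (n := N) (f := g) hsmooth
    (fun n hn ↦ hint n (by exact_mod_cast hn)) le_rfl) (Real.log x)
  rw [mellinInv_eq_fourierInv _ _ hx₀, Real.fourierInv_eq_fourier_neg, neg_neg, norm_smul,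
    ← Complex.ofReal_neg, Complex.norm_cpow_eq_rpow_re_of_pos hx₀, Complex.ofReal_re, mul_assoc]
  gcongr
  calc ‖FourierTransform.fourier g (Real.log x)‖ * (2 * Real.pi * Real.log x) ^ N
      = ‖FourierTransform.fourier (iteratedDeriv N g) (Real.log x)‖ := by
        rw [hfourier, norm_smul, norm_pow, mul_comm]
        simp [abs_of_nonneg hlog, abs_of_pos Real.pi_pos]
    _ ≤ ∫ y, ‖iteratedDeriv N g y‖ :=
        VectorFourier.norm_fourierIntegral_le_integral_norm _ _ _ _ _

lemma contDiff_comp_line {h : ℂ → ℂ} {z₀ w : ℂ} (hh : ∀ y : ℝ, AnalyticAt ℂ h (z₀ + y * w))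
    {n : WithTop ℕ∞} : ContDiff ℝ n fun y : ℝ ↦ h (z₀ + y * w) :=
  contDiff_iff_contDiffAt.2 fun y ↦ by
    have hline : ContDiff ℝ n fun y : ℝ ↦ z₀ + y * w :=
      contDiff_const.add (Complex.ofRealCLM.contDiff.mul contDiff_const)
    exact ((hh y).contDiffAt.restrict_scalars ℝ).comp y hline.contDiffAt

lemma exists_integral_norm_iteratedDeriv_psiErrorTransform_le (n : ℕ) {c : ℝ} (hc : c ≠ 0) :
    ∃ C, ∀ σ : ℝ, 1 ≤ σ → σ ≤ 3 / 2 →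
      Integrable (iteratedDeriv n fun y : ℝ ↦ psiErrorTransform (σ + y * (c * Complex.I))) ∧
      ∫ y, ‖iteratedDeriv n (fun y : ℝ ↦ psiErrorTransform (σ + y * (c * Complex.I))) y‖ ≤ C := by
  obtain ⟨C, hC⟩ := exists_norm_iteratedDeriv_psiErrorTransform_le n
  refine ⟨∫ y : ℝ, |c| ^ n * (C * (1 + |y * c|) ^ (-(3 / 2) : ℝ)), fun σ h₁ h₂ ↦ ?_⟩
  have hanalytic : ∀ y : ℝ, AnalyticAt ℂ psiErrorTransform (σ + y * (c * Complex.I)) :=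
    fun y ↦ analyticAt_psiErrorTransform (by simpa)
  have hbound : ∀ y : ℝ,
      ‖iteratedDeriv n (fun y : ℝ ↦ psiErrorTransform (σ + y * (c * Complex.I))) y‖ ≤
        |c| ^ n * (C * (1 + |y * c|) ^ (-(3 / 2) : ℝ)) := fun y ↦ by
    rw [iteratedDeriv_comp_line hanalytic, norm_mul, norm_pow, norm_mul, Complex.norm_I, mul_one,
      Complex.norm_real, Real.norm_eq_abs]
    gcongr
    simpa using hC (σ + y * (c * Complex.I)) (by simpa) (by simpa)
  have hdom : Integrable fun y : ℝ ↦ |c| ^ n * (C * (1 + |y * c|) ^ (-(3 / 2) : ℝ)) := by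
    have h : Integrable fun y : ℝ ↦ (1 + ‖y‖) ^ (-(3 / 2) : ℝ) :=
      integrable_one_add_norm (by norm_num)
    exact ((h.comp_mul_right' hc).const_mul C).const_mul _
  have hcont : Continuous
      (iteratedDeriv n fun y : ℝ ↦ psiErrorTransform (σ + y * (c * Complex.I))) :=
    (contDiff_comp_line hanalytic).continuous_iteratedDeriv n le_rfl
  have hint := hdom.mono' hcont.aestronglyMeasurable (.of_forall hbound)
  exact ⟨hint, integral_mono hint.norm hdom hbound⟩

lemma verticalIntegrable_psiErrorTransform {σ : ℝ} (h₁ : 1 ≤ σ) (h₂ : σ ≤ 3 / 2) :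
    Complex.VerticalIntegrable (fun s ↦ -psiErrorTransform (-s)) (-σ) := by
  obtain ⟨C, hC⟩ := exists_integral_norm_iteratedDeriv_psiErrorTransform_le 0
    (neg_ne_zero.2 (one_ne_zero (α := ℝ)))
  have h := (hC σ h₁ h₂).1.neg
  simpa [Complex.VerticalIntegrable, sub_eq_add_neg, add_comm] using! h

lemma exists_norm_mellinInv_psiErrorTransform_le (N : ℕ) :
    ∃ C, ∀ σ x : ℝ, 1 ≤ σ → σ ≤ 3 / 2 → 1 < x →
      ‖mellinInv (-σ) (fun s ↦ -psiErrorTransform (-s)) x‖ * Real.log x ^ N ≤ C * x ^ σ := by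
  have hc : -(2 * Real.pi) ≠ 0 := neg_ne_zero.2 Real.two_pi_pos.ne'
  choose C hC using fun n ↦ exists_integral_norm_iteratedDeriv_psiErrorTransform_le n hc
  refine ⟨C N, fun σ x h₁ h₂ hx ↦ ?_⟩
  have hline : ∀ y : ℝ,
      -psiErrorTransform (-(((-σ : ℝ) : ℂ) + 2 * Real.pi * y * Complex.I)) =
        -psiErrorTransform (σ + y * ((-(2 * Real.pi) : ℝ) * Complex.I)) := fun y ↦ by
    push_cast; ring_nf
  have hanalytic : ∀ y : ℝ, AnalyticAt ℂ psiErrorTransform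
      (σ + y * ((-(2 * Real.pi) : ℝ) * Complex.I)) :=
    fun y ↦ analyticAt_psiErrorTransform (by simpa)
  have hlog : 0 ≤ Real.log x := Real.log_nonneg hx.le
  have hdecay := norm_mellinInv_mul_pow_log_le (k := fun s ↦ -psiErrorTransform (-s)) (σ := -σ) hx
    (N := N) (by simpa only [hline] using (contDiff_comp_line hanalytic).neg)
    (fun n _ ↦ by
      simp only [hline, funext (iteratedDeriv_fun_neg n _)]
      exact (hC n σ h₁ h₂).1.neg)
  simp only [hline, iteratedDeriv_fun_neg, norm_neg, neg_neg] at hdecay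
  calc ‖mellinInv (-σ) (fun s ↦ -psiErrorTransform (-s)) x‖ * Real.log x ^ N
      ≤ ‖mellinInv (-σ) (fun s ↦ -psiErrorTransform (-s)) x‖ * (2 * Real.pi * Real.log x) ^ N := by
        gcongr
        exact le_mul_of_one_le_left hlog (by linarith [Real.pi_gt_three])
    _ ≤ x ^ σ * C N := hdecay.trans (by gcongr; exact (hC N σ h₁ h₂).2)
    _ = C N * x ^ σ := mul_comm _ _

end FourierDecay

section MellinTransform

variable {D : ℝ → ℝ} {C : ℝ}

lemma abs_integral_le_mul_sq (hD : ∀ u ≥ 1, |D u| ≤ C * u) {x : ℝ} (hx : 1 ≤ x) :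
    |∫ u in 1..x, D u| ≤ C * x ^ 2 := by
  have hC : 0 ≤ C := by simpa using (abs_nonneg _).trans (hD 1 le_rfl)
  have h := intervalIntegral.norm_integral_le_of_norm_le_const (a := 1) (b := x) (f := D)
    (C := C * x) fun u hu ↦ by
      rw [uIoc_of_le hx] at hu
      exact (hD u hu.1.le).trans (by gcongr; exact hu.2)
  refine h.trans ?_
  rw [abs_of_nonneg (by linarith)]
  nlinarith [mul_nonneg hC (zero_le_one.trans hx)]

lemma continuousOn_ofReal_cpow (s : ℂ) : ContinuousOn (fun x : ℝ ↦ (x : ℂ) ^ s) (Ici 1) :=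
  Complex.continuous_ofReal.continuousOn.cpow_const fun _ hx ↦
    Complex.ofReal_mem_slitPlane.2 (zero_lt_one.trans_le hx)

lemma integrableOn_mul_cpow_of_abs_le {g : ℝ → ℝ} {a : ℝ} {s : ℂ}
    (hmeas : LocallyIntegrable g) (hg : ∀ x ≥ 1, |g x| ≤ C * x ^ a) (hs : s.re + a < -1) :
    IntegrableOn (fun x : ℝ ↦ (g x : ℂ) * (x : ℂ) ^ s) (Ioi 1) := by
  have hdom : IntegrableOn (fun x : ℝ ↦ C * x ^ (s.re + a)) (Ioi 1) :=
    (integrableOn_Ioi_rpow_of_lt hs one_pos).const_mul C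
  have hcpow := ((continuousOn_ofReal_cpow s).mono Ioi_subset_Ici_self).aestronglyMeasurable
    (μ := volume) measurableSet_Ioi
  have hmeas' : AEStronglyMeasurable (fun x ↦ (g x : ℂ)) (volume.restrict (Ioi 1)) :=
    Complex.continuous_ofReal.comp_aestronglyMeasurable hmeas.aestronglyMeasurable.restrict
  refine hdom.mono' (hmeas'.mul hcpow) ((ae_restrict_mem measurableSet_Ioi).mono fun x hx ↦ ?_)
  have hx₀ : (0 : ℝ) < x := one_pos.trans hx
  rw [norm_mul, Complex.norm_real, Complex.norm_cpow_eq_rpow_re_of_pos hx₀, Real.rpow_add hx₀,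
    mul_comm (x ^ s.re), ← mul_assoc]
  exact mul_le_mul_of_nonneg_right (hg x (le_of_lt hx)) (Real.rpow_nonneg hx₀.le _)

lemma continuous_primitive_of_locallyIntegrable (hint : LocallyIntegrable D) :
    Continuous fun x ↦ ∫ u in 1..x, D u :=
  intervalIntegral.continuous_primitive
    (fun _ _ ↦ (hint.integrableOn_isCompact isCompact_uIcc).intervalIntegrable) 1

lemma integrableOn_primitive_mul_cpow (hint : LocallyIntegrable D)
    (hD : ∀ u ≥ 1, |D u| ≤ C * u) {s : ℂ} (hs : 1 < s.re) :
    IntegrableOn (fun x : ℝ ↦ ((∫ u in 1..x, D u : ℝ) : ℂ) * (x : ℂ) ^ (-s - 2)) (Ioi 1) :=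
  integrableOn_mul_cpow_of_abs_le (a := 2)
    (continuous_primitive_of_locallyIntegrable hint).locallyIntegrable
    (fun _ hx ↦ by simpa using abs_integral_le_mul_sq hD hx) (by simp; linarith)

lemma hasDerivAt_ofReal_cpow_div {s : ℂ} (hs : s + 1 ≠ 0) {x : ℝ} (hx : x ≠ 0) :
    HasDerivAt (fun x : ℝ ↦ (x : ℂ) ^ (-s - 1) / (-s - 1)) ((x : ℂ) ^ (-s - 2)) x := by
  have h := hasDerivAt_ofReal_cpow_const' hx (r := -s - 2)
    (fun h ↦ hs (by linear_combination -h))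
  simpa only [show -s - 2 + 1 = -s - 1 by ring] using h

lemma intervalIntegral_primitive_mul_cpow (hint : LocallyIntegrable D)
    (hright : ∀ x > 1, ContinuousWithinAt D (Ioi x) x) {s : ℂ} (hs : s + 1 ≠ 0) {X : ℝ}
    (hX : 1 ≤ X) :
    ∫ x in 1..X, ((∫ u in 1..x, D u : ℝ) : ℂ) * (x : ℂ) ^ (-s - 2) =
      ((∫ u in 1..X, D u : ℝ) : ℂ) * ((X : ℂ) ^ (-s - 1) / (-s - 1)) -
        ∫ x in 1..X, (D x : ℂ) * ((x : ℂ) ^ (-s - 1) / (-s - 1)) := by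
  have hpos : ∀ x ∈ uIcc 1 X, x ≠ 0 := fun x hx ↦ by
    rw [uIcc_of_le hX] at hx
    linarith [hx.1]
  have hderiv : ∀ x ∈ uIcc 1 X, HasDerivAt (fun x : ℝ ↦ (x : ℂ) ^ (-s - 1) / (-s - 1))
      ((x : ℂ) ^ (-s - 2)) x := fun x hx ↦ hasDerivAt_ofReal_cpow_div hs (hpos x hx)
  have hcpow : ContinuousOn (fun x : ℝ ↦ (x : ℂ) ^ (-s - 2)) (uIcc 1 X) :=
    (continuousOn_ofReal_cpow _).mono (uIcc_of_le hX ▸ Icc_subset_Ici_self)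
  have hinterval : ∀ b, IntervalIntegrable D volume 1 b :=
    fun b ↦ (hint.integrableOn_isCompact isCompact_uIcc).intervalIntegrable
  have h := intervalIntegral.integral_mul_deriv_eq_deriv_mul_of_hasDeriv_right
    (u := fun x ↦ ((∫ u in 1..x, D u : ℝ) : ℂ)) (u' := fun x ↦ (D x : ℂ))
    (Complex.continuous_ofReal.comp
      (continuous_primitive_of_locallyIntegrable hint)).continuousOn
    (fun x hx ↦ (hderiv x hx).continuousAt.continuousWithinAt) (fun x hx ↦ ?_)
    (fun x hx ↦ (hderiv x (Ioo_subset_Icc_self hx)).hasDerivWithinAt)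
    ⟨(hinterval X).1.ofReal, (hinterval X).2.ofReal⟩ hcpow.intervalIntegrable
  · simpa using h
  · rw [min_eq_left hX] at hx
    exact ((intervalIntegral.integral_hasDerivWithinAt_right (s := Ici x) (hinterval x)
      hint.aestronglyMeasurable.stronglyMeasurableAtFilter
      (hright x hx.1)).mono Ioi_subset_Ici_self).ofReal_comp

lemma tendsto_primitive_mul_cpow (hD : ∀ u ≥ 1, |D u| ≤ C * u) {s : ℂ} (hs : 1 < s.re) :
    Tendsto (fun X : ℝ ↦ ((∫ u in 1..X, D u : ℝ) : ℂ) * ((X : ℂ) ^ (-s - 1) / (-s - 1)))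
      atTop (𝓝 0) := by
  have hlim : Tendsto (fun X : ℝ ↦ C * X ^ (-(s.re - 1)) / ‖-s - 1‖) atTop (𝓝 0) := by
    simpa using ((tendsto_rpow_neg_atTop (sub_pos.2 hs)).const_mul C).div_const ‖-s - 1‖
  refine squeeze_zero_norm' ((eventually_ge_atTop 1).mono fun X hX ↦ ?_) hlim
  have hX₀ : 0 < X := one_pos.trans_le hX
  rw [norm_mul, norm_div, Complex.norm_real, Complex.norm_cpow_eq_rpow_re_of_pos hX₀,
    ← mul_div_assoc]
  refine div_le_div_of_nonneg_right ?_ (norm_nonneg _)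
  calc ‖∫ u in 1..X, D u‖ * X ^ (-s - 1).re ≤ C * X ^ (2 : ℝ) * X ^ (-s - 1).re := by
        gcongr
        simpa using abs_integral_le_mul_sq hD hX
    _ = C * X ^ (-(s.re - 1)) := by
        rw [mul_assoc, ← Real.rpow_add hX₀]
        congr 2
        simp only [Complex.sub_re, Complex.neg_re, Complex.one_re]
        ring

lemma integral_primitive_mul_cpow (hint : LocallyIntegrable D) (hD : ∀ u ≥ 1, |D u| ≤ C * u)
    (hright : ∀ x > 1, ContinuousWithinAt D (Ioi x) x) {s : ℂ} (hs : 1 < s.re) :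
    ∫ x in Ioi (1 : ℝ), ((∫ u in 1..x, D u : ℝ) : ℂ) * (x : ℂ) ^ (-s - 2) =
      (∫ x in Ioi (1 : ℝ), (D x : ℂ) * (x : ℂ) ^ (-s - 1)) / (s + 1) := by
  have hs₁ : s + 1 ≠ 0 := fun h ↦ by
    have := congrArg Complex.re h
    simp only [Complex.add_re, Complex.one_re, Complex.zero_re] at this
    linarith
  have hDint : IntegrableOn (fun x : ℝ ↦ (D x : ℂ) * ((x : ℂ) ^ (-s - 1) / (-s - 1))) (Ioi 1) := by
    simpa only [IntegrableOn, mul_div_assoc] using (integrableOn_mul_cpow_of_abs_le (s := -s - 1)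
      (a := 1) hint (by simpa using hD) (by simpa)).div_const (-s - 1)
  have hlim := intervalIntegral_tendsto_integral_Ioi 1
    (integrableOn_primitive_mul_cpow hint hD hs) tendsto_id
  have hlim' := (tendsto_primitive_mul_cpow hD hs).sub
    (intervalIntegral_tendsto_integral_Ioi 1 hDint tendsto_id)
  rw [tendsto_nhds_unique (hlim.congr' ((eventually_ge_atTop 1).mono fun X hX ↦
    intervalIntegral_primitive_mul_cpow hint hright hs₁ hX)) hlim', zero_sub]
  simp only [← mul_div_assoc, integral_div]
  rw [← div_neg]
  congr 1
  ring

lemma continuousWithinAt_psi (x : ℝ) : ContinuousWithinAt Chebyshev.psi (Ioi x) x := by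
  have hfloor : ∀ᶠ y in 𝓝[>] x, ⌊y⌋ = ⌊x⌋ :=
    tendsto_pure.1 ((tendsto_floor_right_pure_floor x).mono_left
      (nhdsWithin_mono x Ioi_subset_Ici_self))
  refine tendsto_const_nhds.congr' (hfloor.mono fun y hy ↦ ?_)
  simp only [Chebyshev.psi, ← Int.floor_toNat, hy]

lemma locallyIntegrable_psi_sub_id : LocallyIntegrable fun u ↦ Chebyshev.psi u - u :=
  Chebyshev.psi_mono.locallyIntegrable.sub continuous_id.locallyIntegrable

lemma abs_psi_sub_self_le {u : ℝ} (hu : 0 ≤ u) : |Chebyshev.psi u - u| ≤ (Real.log 4 + 4) * u := by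
  have h₁ := Chebyshev.psi_nonneg u
  have h₂ := Chebyshev.psi_le_const_mul_self hu
  have h₃ : 0 ≤ Real.log 4 := Real.log_nonneg (by norm_num)
  rw [abs_le]
  constructor <;> nlinarith

/-- The primitive `E(x) = ∫ u in 1..x, (ψ(u) - u)` of the error term in the prime number theorem,
which is continuous and hence can be recovered from its Mellin transform by inversion. -/
def psiErrorPrimitive (x : ℝ) : ℝ := ∫ u in 1..x, (Chebyshev.psi u - u)

lemma integral_psi_mul_cpow {s : ℂ} (hs : 1 < s.re) :
    s * ∫ x in Ioi (1 : ℝ), (Chebyshev.psi x : ℂ) * (x : ℂ) ^ (-s - 1) =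
      -deriv riemannZeta s / riemannZeta s := by
  have hbigO : (fun n : ℕ ↦ ∑ k ∈ Finset.Icc 1 n, ArithmeticFunction.vonMangoldt k) =O[atTop]
      fun n ↦ (n : ℝ) ^ (1 : ℝ) :=
    Asymptotics.IsBigO.of_bound (Real.log 4 + 4) (.of_forall fun n ↦ by
      have h := Chebyshev.psi_le_const_mul_self n.cast_nonneg
      rw [Chebyshev.psi, Nat.floor_natCast] at h
      rw [Real.norm_of_nonneg
        (Finset.sum_nonneg fun _ _ ↦ ArithmeticFunction.vonMangoldt_nonneg)]
      simpa [← Finset.Icc_add_one_left_eq_Ioc] using h)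
  rw [← ArithmeticFunction.LSeries_vonMangoldt_eq_deriv_riemannZeta_div hs,
    LSeries_eq_mul_integral_of_nonneg _ zero_le_one hs hbigO
      fun _ ↦ ArithmeticFunction.vonMangoldt_nonneg]
  congr 2 with x
  rw [Chebyshev.psi, Complex.ofReal_sum, neg_add']
  rfl

lemma logDeriv_riemannZeta₁_of_one_lt_re {s : ℂ} (hs : 1 < s.re) :
    logDeriv riemannZeta₁ s = 1 / (s - 1) + deriv riemannZeta s / riemannZeta s := by
  have hs₁ : s ≠ 1 := by rintro rfl; norm_num at hs
  have heq : riemannZeta₁ =ᶠ[𝓝 s] fun z ↦ (z - 1) * riemannZeta z :=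
    (eventually_ne_nhds hs₁).mono fun _ ↦ riemannZeta₁_eq_sub_one_mul
  rw [logDeriv_apply, heq.deriv_eq, heq.eq_of_nhds, ← logDeriv_apply,
    logDeriv_mul (f := fun z ↦ z - 1) s (sub_ne_zero.2 hs₁)
      (riemannZeta_ne_zero_of_one_lt_re hs) (by fun_prop) (differentiableAt_riemannZeta hs₁)]
  simp [logDeriv_apply]

lemma integral_psi_sub_self_mul_cpow {s : ℂ} (hs : 1 < s.re) :
    ∫ x in Ioi (1 : ℝ), ((Chebyshev.psi x - x : ℝ) : ℂ) * (x : ℂ) ^ (-s - 1) =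
      -((logDeriv riemannZeta₁ s + 1) / s) := by
  have hs₀ : s ≠ 0 := by rintro rfl; norm_num at hs
  have hs₁ : s - 1 ≠ 0 := sub_ne_zero.2 (by rintro rfl; norm_num at hs)
  have hpsi : IntegrableOn (fun x : ℝ ↦ (Chebyshev.psi x : ℂ) * (x : ℂ) ^ (-s - 1)) (Ioi 1) :=
    integrableOn_mul_cpow_of_abs_le (a := 1) Chebyshev.psi_mono.locallyIntegrable
      (fun x hx ↦ by
        rw [abs_of_nonneg (Chebyshev.psi_nonneg x), Real.rpow_one]
        exact Chebyshev.psi_le_const_mul_self (zero_le_one.trans hx)) (by simpa)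
  have hcpow : ∀ x ∈ Ioi (1 : ℝ), (x : ℂ) * (x : ℂ) ^ (-s - 1) = (x : ℂ) ^ (-s) := fun x hx ↦ by
    have hx₀ : (x : ℂ) ≠ 0 := by exact_mod_cast (one_pos.trans hx).ne'
    rw [Complex.cpow_sub _ _ hx₀, Complex.cpow_one, mul_div_cancel₀ _ hx₀]
  have hid : IntegrableOn (fun x : ℝ ↦ (x : ℂ) ^ (-s)) (Ioi 1) :=
    integrableOn_Ioi_cpow_of_lt (by simpa) one_pos
  calc ∫ x in Ioi (1 : ℝ), ((Chebyshev.psi x - x : ℝ) : ℂ) * (x : ℂ) ^ (-s - 1)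
      = ∫ x in Ioi (1 : ℝ), ((Chebyshev.psi x : ℂ) * (x : ℂ) ^ (-s - 1) - (x : ℂ) ^ (-s)) :=
        setIntegral_congr_fun measurableSet_Ioi fun x hx ↦ by
          simp only [Complex.ofReal_sub, sub_mul, hcpow x hx]
    _ = -deriv riemannZeta s / riemannZeta s / s - 1 / (s - 1) := by
        rw [integral_sub hpsi hid, integral_Ioi_cpow_of_lt (by simpa) one_pos,
          eq_div_of_mul_eq hs₀ ((mul_comm _ _).trans (integral_psi_mul_cpow hs))]
        congr 1
        rw [Complex.ofReal_one, Complex.one_cpow, ← neg_div_neg_eq, neg_neg]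
        congr 1
        ring
    _ = -((logDeriv riemannZeta₁ s + 1) / s) := by
        rw [logDeriv_riemannZeta₁_of_one_lt_re hs]
        field_simp
        ring

lemma mellinKernel_psiErrorPrimitive (s : ℂ) :
    EqOn (fun x : ℝ ↦ (x : ℂ) ^ (-s - 1) •
        (Ioi 1).indicator (fun x ↦ ((psiErrorPrimitive x / x : ℝ) : ℂ)) x)
      ((Ioi 1).indicator fun x ↦ (psiErrorPrimitive x : ℂ) * (x : ℂ) ^ (-s - 2)) (Ioi 0) := by
  intro x hx
  have hx₀ : (x : ℂ) ≠ 0 := by exact_mod_cast (ne_of_gt hx)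
  by_cases h : x ∈ Ioi 1
  · simp only [indicator_of_mem h, smul_eq_mul, Complex.ofReal_div]
    rw [show -s - 2 = -s - 1 - 1 by ring, Complex.cpow_sub (-s - 1) 1 hx₀, Complex.cpow_one,
      mul_div_left_comm]
  · simp only [indicator_of_notMem h, smul_zero]

lemma mellin_psiErrorPrimitive {s : ℂ} (hs : 1 < s.re) :
    mellin ((Ioi 1).indicator fun x ↦ ((psiErrorPrimitive x / x : ℝ) : ℂ)) (-s) =
      -psiErrorTransform s := by
  rw [mellin, setIntegral_congr_fun measurableSet_Ioi (mellinKernel_psiErrorPrimitive s),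
    setIntegral_indicator measurableSet_Ioi,
    inter_eq_self_of_subset_right (Ioi_subset_Ioi zero_le_one)]
  simp only [psiErrorPrimitive]
  rw [integral_primitive_mul_cpow locallyIntegrable_psi_sub_id
    (fun u hu ↦ abs_psi_sub_self_le (zero_le_one.trans hu))
    (fun x _ ↦ (continuousWithinAt_psi x).sub continuousWithinAt_id) hs,
    integral_psi_sub_self_mul_cpow hs, neg_div, div_div, psiErrorTransform]

lemma mellinConvergent_psiErrorPrimitive {s : ℂ} (hs : 1 < s.re) :
    MellinConvergent ((Ioi 1).indicator fun x ↦ ((psiErrorPrimitive x / x : ℝ) : ℂ)) (-s) := by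
  rw [MellinConvergent, integrableOn_congr_fun (mellinKernel_psiErrorPrimitive s) measurableSet_Ioi]
  exact ((integrable_indicator_iff measurableSet_Ioi).2
    (integrableOn_primitive_mul_cpow locallyIntegrable_psi_sub_id
      (fun u hu ↦ abs_psi_sub_self_le (zero_le_one.trans hu)) hs)).integrableOn

lemma psiErrorPrimitive_eq_mellinInv {σ x : ℝ} (hσ : 1 < σ) (hσ' : σ ≤ 3 / 2) (hx : 1 < x) :
    ((psiErrorPrimitive x / x : ℝ) : ℂ) = mellinInv (-σ) (fun s ↦ -psiErrorTransform (-s)) x := by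
  set g : ℝ → ℂ := (Ioi 1).indicator fun x ↦ ((psiErrorPrimitive x / x : ℝ) : ℂ) with hg
  have hline : ∀ y : ℝ, mellin g ((-σ : ℝ) + y * Complex.I) =
      -psiErrorTransform (-((-σ : ℝ) + y * Complex.I)) := fun y ↦ by
    rw [← mellin_psiErrorPrimitive (by simpa using hσ), neg_neg]
  have hcont : ContinuousAt g x := by
    have hprim : Continuous psiErrorPrimitive :=
      continuous_primitive_of_locallyIntegrable locallyIntegrable_psi_sub_id
    refine (Complex.continuous_ofReal.continuousAt.comp
      (hprim.continuousAt.div continuousAt_id (by simp; linarith))).congr ?_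
    filter_upwards [Ioi_mem_nhds hx] with y hy
    exact (indicator_of_mem hy _).symm
  have hinv := mellinInv_mellin_eq (-σ) g (by linarith)
    (by rw [Complex.ofReal_neg]; exact mellinConvergent_psiErrorPrimitive (by simpa using hσ))
    (by simpa only [Complex.VerticalIntegrable, hline] using
      verticalIntegrable_psiErrorTransform hσ.le hσ') hcont
  rw [← indicator_of_mem (show x ∈ Ioi 1 from hx)
    fun x ↦ ((psiErrorPrimitive x / x : ℝ) : ℂ), ← hg, ← hinv]
  simp only [mellinInv, hline]

lemma exists_abs_psiErrorPrimitive_le (N : ℕ) :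
    ∃ C, ∀ x ≥ Real.exp 2, |psiErrorPrimitive x| * Real.log x ^ N ≤ C * x ^ 2 := by
  obtain ⟨C, hC⟩ := exists_norm_mellinInv_psiErrorTransform_le N
  refine ⟨C * Real.exp 1, fun x hx ↦ ?_⟩
  have hx₁ : 1 < x := (Real.one_lt_exp_iff.2 two_pos).trans_le hx
  have hlog : 2 ≤ Real.log x := (Real.le_log_iff_exp_le (by linarith)).2 hx
  have hσ : 1 < 1 + 1 / Real.log x := by simp; linarith
  have hσ' : 1 + 1 / Real.log x ≤ 3 / 2 := by
    have := one_div_le_one_div_of_le two_pos hlog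
    linarith
  have h := hC _ x hσ.le hσ' hx₁
  rw [← psiErrorPrimitive_eq_mellinInv hσ hσ' hx₁, Complex.norm_real, norm_div,
    Real.norm_of_nonneg (by linarith : 0 ≤ x), Real.norm_eq_abs, div_mul_eq_mul_div,
    div_le_iff₀ (by linarith), Real.rpow_add (by linarith), Real.rpow_one,
    Real.rpow_def_of_pos (by linarith) (1 / _), mul_one_div_cancel (by linarith)] at h
  linarith

end MellinTransform

section PrimeNumberTheorem

lemma intervalIntegrable_psi_sub_id (x y : ℝ) :
    IntervalIntegrable (fun u ↦ Chebyshev.psi u - u) volume x y :=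
  Chebyshev.psi_mono.intervalIntegrable.sub intervalIntegral.intervalIntegrable_id

lemma psiErrorPrimitive_sub {x y : ℝ} :
    psiErrorPrimitive y - psiErrorPrimitive x = ∫ u in x..y, (Chebyshev.psi u - u) :=
  intervalIntegral.integral_interval_sub_left
    (intervalIntegrable_psi_sub_id 1 y) (intervalIntegrable_psi_sub_id 1 x)

lemma integral_const_sub_id (c x y : ℝ) :
    ∫ u in x..y, (c - u) = (y - x) * (c - (x + y) / 2) := by
  rw [intervalIntegral.integral_sub intervalIntegrable_const intervalIntegral.intervalIntegrable_id,
    intervalIntegral.integral_const, integral_id, smul_eq_mul]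
  ring

lemma mul_psi_sub_le_psiErrorPrimitive_sub {x y : ℝ} (hxy : x ≤ y) :
    (y - x) * (Chebyshev.psi x - (x + y) / 2) ≤ psiErrorPrimitive y - psiErrorPrimitive x := by
  rw [psiErrorPrimitive_sub, ← integral_const_sub_id]
  refine intervalIntegral.integral_mono_on hxy
    (intervalIntegrable_const.sub intervalIntegral.intervalIntegrable_id)
    (intervalIntegrable_psi_sub_id x y) fun u hu ↦ ?_
  exact sub_le_sub_right (Chebyshev.psi_mono hu.1) u

lemma psiErrorPrimitive_sub_le_mul_psi_sub {x y : ℝ} (hxy : x ≤ y) :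
    psiErrorPrimitive y - psiErrorPrimitive x ≤ (y - x) * (Chebyshev.psi y - (x + y) / 2) := by
  rw [psiErrorPrimitive_sub, ← integral_const_sub_id]
  refine intervalIntegral.integral_mono_on hxy
    (intervalIntegrable_psi_sub_id x y)
    (intervalIntegrable_const.sub intervalIntegral.intervalIntegrable_id) fun u hu ↦ ?_
  exact sub_le_sub_right (Chebyshev.psi_mono hu.2) u

lemma mul_abs_psi_sub_self_le {x h B : ℝ} (hh : 0 ≤ h)
    (hB : ∀ y ∈ Icc (x - h) (x + h), |psiErrorPrimitive y| ≤ B) :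
    h * |Chebyshev.psi x - x| ≤ 2 * B + h ^ 2 / 2 := by
  have hright := mul_psi_sub_le_psiErrorPrimitive_sub (le_add_of_nonneg_right hh : x ≤ x + h)
  have hleft := psiErrorPrimitive_sub_le_mul_psi_sub (sub_le_self x hh)
  have hx := abs_le.1 (hB x ⟨by linarith, by linarith⟩)
  have hxh := abs_le.1 (hB (x + h) ⟨by linarith, le_rfl⟩)
  have hxh' := abs_le.1 (hB (x - h) ⟨le_rfl, by linarith⟩)
  rw [← abs_of_nonneg hh, ← abs_mul, abs_of_nonneg hh, abs_le]
  constructor <;> linarith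

lemma exists_eventually_abs_psiErrorPrimitive_le (N : ℕ) :
    ∃ C, ∀ᶠ x in atTop, ∀ y ∈ Icc (x / 2) (2 * x),
      |psiErrorPrimitive y| ≤ C * (x ^ 2 / Real.log x ^ N) := by
  obtain ⟨C, hC⟩ := exists_abs_psiErrorPrimitive_le N
  refine ⟨4 * |C| * 2 ^ N, ?_⟩
  filter_upwards [eventually_ge_atTop (2 * Real.exp 2)] with x hx y hy
  have hexp := Real.add_one_le_exp 2
  have hyx : 0 < x / 2 := by linarith
  have hlog : Real.log x / 2 ≤ Real.log y := by
    have hlog_four : Real.log 4 ≤ Real.log x := Real.log_le_log (by norm_num) (by linarith)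
    have hlog_half : Real.log (x / 2) = Real.log x - Real.log 4 / 2 := by
      rw [Real.log_div (by linarith) two_ne_zero, (by norm_num : (4 : ℝ) = 2 ^ 2), Real.log_pow]
      simp
    linarith [Real.log_le_log hyx hy.1]
  have hlogx : 0 < Real.log x := Real.log_pos (by linarith)
  rw [← mul_div_assoc, le_div_iff₀ (by positivity)]
  calc |psiErrorPrimitive y| * Real.log x ^ N
      = |psiErrorPrimitive y| * (Real.log x / 2) ^ N * 2 ^ N := by rw [div_pow]; field_simp
    _ ≤ |psiErrorPrimitive y| * Real.log y ^ N * 2 ^ N := by gcongr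
    _ ≤ |C| * (2 * x) ^ 2 * 2 ^ N := by
      refine mul_le_mul_of_nonneg_right ?_ (by positivity)
      exact (hC y (by linarith [hy.1])).trans
        (mul_le_mul (le_abs_self C) (pow_le_pow_left₀ (by linarith [hy.1]) hy.2 2)
          (sq_nonneg y) (abs_nonneg C))
    _ = 4 * |C| * 2 ^ N * x ^ 2 := by ring

-- Balancing the smoothing loss `h` against the error `x² / (h (log x) ^ (2 (A + 1)))` of the
-- primitive forces `h = x / (log x) ^ (A + 1)`.
lemma psi_sub_id_isBigO (A : ℕ) :
    (fun x ↦ Chebyshev.psi x - x) =O[atTop] fun x ↦ x / Real.log x ^ (A + 1) := by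
  obtain ⟨C, hbound⟩ := exists_eventually_abs_psiErrorPrimitive_le (2 * (A + 1))
  refine Asymptotics.IsBigO.of_bound (2 * C + 1 / 2) ?_
  filter_upwards [hbound, eventually_gt_atTop 0, Real.tendsto_log_atTop.eventually_ge_atTop 2]
    with x hx hx0 hlog
  set h := x / Real.log x ^ (A + 1) with h_def
  have hpow : 2 ≤ Real.log x ^ (A + 1) :=
    hlog.trans (le_self_pow₀ (by linarith) (Nat.succ_ne_zero A))
  have hh : 0 < h := by positivity
  have hhx : h ≤ x / 2 := div_le_div_of_nonneg_left hx0.le two_pos hpow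
  rw [Real.norm_eq_abs, Real.norm_of_nonneg hh.le]
  refine le_of_mul_le_mul_left ?_ hh
  calc h * |Chebyshev.psi x - x|
      ≤ 2 * (C * (x ^ 2 / Real.log x ^ (2 * (A + 1)))) + h ^ 2 / 2 :=
        mul_abs_psi_sub_self_le hh.le fun y hy ↦
          hx y ⟨by linarith [hy.1], by linarith [hy.2]⟩
    _ = h * ((2 * C + 1 / 2) * h) := by rw [h_def, mul_comm 2 (A + 1), pow_mul]; ring

lemma sqrt_isBigO_div_log_pow (A : ℕ) :
    Real.sqrt =O[atTop] fun x ↦ x / Real.log x ^ A := by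
  refine Asymptotics.IsBigO.of_bound 1 ?_
  filter_upwards [(Real.isLittleO_pow_log_id_atTop (n := 2 * A)).bound one_pos,
    eventually_gt_atTop 1] with x hx hx1
  have hlog : 0 < Real.log x := Real.log_pos hx1
  have hx0 : 0 ≤ x := by linarith
  rw [one_mul, id, Real.norm_of_nonneg (by positivity), Real.norm_of_nonneg hx0] at hx
  rw [one_mul, Real.norm_of_nonneg (by positivity), Real.norm_of_nonneg (by positivity),
    le_div_iff₀ (by positivity)]
  calc √x * Real.log x ^ A = √x * √(Real.log x ^ (2 * A)) := by
        rw [mul_comm 2 A, pow_mul, Real.sqrt_sq (by positivity)]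
    _ ≤ √x * √x := by gcongr
    _ = x := Real.mul_self_sqrt hx0

lemma theta_sub_id_isBigO (A : ℕ) :
    (fun x ↦ Chebyshev.theta x - x) =O[atTop] fun x ↦ x / Real.log x ^ (A + 1) := by
  have hdiff := Chebyshev.isBigO_psi_sub_theta_sqrt.trans (sqrt_isBigO_div_log_pow (A + 1))
  exact ((psi_sub_id_isBigO A).sub hdiff).congr_left fun x ↦ by
    simp only [Pi.sub_apply]; ring

end PrimeNumberTheorem

section ShortIntervals

lemma exists_eventually_le_theta_sub_theta (D : ℕ) : ∃ C, 0 ≤ C ∧ ∀ᶠ x in atTop, ∀ y,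
    x + x / Real.log x ^ D ≤ y → y ≤ 2 * x →
      (y - x) * (1 - C / Real.log x) ≤ Chebyshev.theta y - Chebyshev.theta x := by
  obtain ⟨c, hc, hθ⟩ := (theta_sub_id_isBigO D).exists_nonneg
  refine ⟨3 * c, by positivity, ?_⟩
  obtain ⟨x₀, hx₀⟩ := eventually_atTop.1 hθ.bound
  filter_upwards [eventually_ge_atTop x₀, eventually_gt_atTop 1] with x hx hx1 y hxy hyx
  have hlog : 0 < Real.log x := Real.log_pos hx1
  have hgap : 0 ≤ x / Real.log x ^ D := by positivity
  have hle : x ≤ y := by linarith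
  have hlog_le : Real.log x ≤ Real.log y := Real.log_le_log (by linarith) hle
  have hlogy : 0 < Real.log y := hlog.trans_le hlog_le
  have hy : 0 < y := by linarith
  have hθx := hx₀ x hx
  have hθy := hx₀ y (hx.trans hle)
  rw [Real.norm_eq_abs, Real.norm_of_nonneg (by positivity)] at hθx hθy
  have hy_err : c * (y / Real.log y ^ (D + 1)) ≤ c * (2 * x / Real.log x ^ (D + 1)) := by gcongr
  have hx_err : 3 * c / Real.log x * (x / Real.log x ^ D) ≤ 3 * c / Real.log x * (y - x) := by
    gcongr
    linarith
  have herr : c * (2 * x / Real.log x ^ (D + 1)) + c * (x / Real.log x ^ (D + 1)) =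
      3 * c / Real.log x * (x / Real.log x ^ D) := by
    field_simp
    ring
  linarith [(abs_le.1 hθx).2, (abs_le.1 hθy).1]

lemma theta_sub_theta_eq_sum {a b : ℕ} (hab : a ≤ b) :
    Chebyshev.theta b - Chebyshev.theta a =
      ∑ p ∈ (Finset.Ioc a b).filter Nat.Prime, Real.log p := by
  simp only [Chebyshev.theta, Nat.floor_natCast, Finset.sum_filter]
  rw [sub_eq_iff_eq_add', Finset.sum_Ioc_consecutive _ a.zero_le hab]

lemma theta_sub_theta_le_sum_one_div {a b : ℕ} (hab : a ≤ b) :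
    Chebyshev.theta b - Chebyshev.theta a ≤
      (∑ p ∈ (Finset.Ioc a b).filter Nat.Prime, 1 / (p : ℝ)) * (b * Real.log b) := by
  rw [theta_sub_theta_eq_sum hab, Finset.sum_mul]
  refine Finset.sum_le_sum fun p hp ↦ ?_
  obtain ⟨hpb, hprime⟩ := Finset.mem_filter.1 hp
  have hp0 : (0 : ℝ) < p := mod_cast hprime.pos
  have hpb : (p : ℝ) ≤ b := mod_cast (Finset.mem_Ioc.1 hpb).2
  rw [one_div_mul_eq_div, le_div_iff₀' hp0]
  exact mul_le_mul hpb (Real.log_le_log hp0 hpb) (Real.log_natCast_nonneg p) b.cast_nonneg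

lemma one_add_sum_le_prod_one_add {ι : Type*} (s : Finset ι) {g : ι → ℝ}
    (hg : ∀ i ∈ s, 0 ≤ g i) : 1 + ∑ i ∈ s, g i ≤ ∏ i ∈ s, (1 + g i) := by
  classical
  induction s using Finset.induction_on with
  | empty => simp
  | insert j s hj ih =>
    rw [Finset.forall_mem_insert] at hg
    rw [Finset.sum_insert hj, Finset.prod_insert hj]
    nlinarith [ih hg.2, mul_nonneg hg.1 (Finset.sum_nonneg hg.2)]

lemma one_sub_mul_mul_log_le {a b c δ : ℝ} (hlog : 1 ≤ Real.log a) (hb : 1 ≤ b)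
    (hba : b ≤ a * (1 + 1 / Real.log a)) (hc : 0 ≤ c) (hδ : δ ≤ 1)
    (hδc : 3 + c ≤ δ * Real.log a) :
    (1 - δ) * (b * Real.log b) ≤ a * Real.log a * (1 - c / Real.log a) := by
  have hL : 0 < Real.log a := by linarith
  set x := 1 / Real.log a with hx
  have hx0 : 0 < x := by positivity
  have hx1 : x ≤ 1 := (div_le_one hL).2 hlog
  have ha : 0 < a := pos_of_mul_pos_left ((zero_lt_one.trans_le hb).trans_le hba) (by positivity)
  have hLx : Real.log a * x = 1 := mul_one_div_cancel hL.ne'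
  have hlogb : Real.log b ≤ Real.log a * (1 + x) := by
    have h := Real.log_le_log (by linarith) hba
    rw [Real.log_mul ha.ne' (by positivity)] at h
    linarith [Real.log_le_sub_one_of_pos (by positivity : 0 < 1 + x)]
  have hδx : (3 + c) * x ≤ δ := by
    rw [hx, mul_one_div, div_le_iff₀ hL]
    exact hδc
  have hδ0 : 0 ≤ δ * x := mul_nonneg ((by positivity : 0 ≤ (3 + c) * x).trans hδx) hx0.le
  calc (1 - δ) * (b * Real.log b)
      ≤ (1 - δ) * (a * (1 + x) * (Real.log a * (1 + x))) := by
        have := Real.log_nonneg hb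
        gcongr
    _ = a * Real.log a * ((1 - δ) * (1 + (2 + x) * x)) := by ring
    _ ≤ a * Real.log a * ((1 - δ) * (1 + 3 * x)) := by gcongr; linarith
    _ ≤ a * Real.log a * (1 - c / Real.log a) := by
      rw [← mul_one_div c, ← hx]
      gcongr
      linarith

lemma one_sub_mul_div_le_sum_one_div {a b : ℕ} {c δ : ℝ} (hlog : 1 ≤ Real.log a) (hab : a ≤ b)
    (hba : (b : ℝ) ≤ a * (1 + 1 / Real.log a)) (hc : 0 ≤ c) (hδ : δ ≤ 1)
    (hδc : 3 + c ≤ δ * Real.log a)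
    (hθ : ((b : ℝ) - a) * (1 - c / Real.log a) ≤ Chebyshev.theta b - Chebyshev.theta a) :
    (1 - δ) * ((b - a) / (a * Real.log a)) ≤
      ∑ p ∈ (Finset.Ioc a b).filter Nat.Prime, 1 / (p : ℝ) := by
  set S := ∑ p ∈ (Finset.Ioc a b).filter Nat.Prime, 1 / (p : ℝ)
  have hab' : (0 : ℝ) ≤ b - a := sub_nonneg.2 (mod_cast hab)
  have ha : (1 : ℝ) < a := (Real.log_pos_iff a.cast_nonneg).1 (by linarith)
  have hb : (1 : ℝ) < b := by linarith
  have hden : 0 < a * Real.log a := by positivity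
  rw [← mul_div_assoc, div_le_iff₀ hden]
  refine le_of_mul_le_mul_right ?_ (mul_pos (by linarith) (Real.log_pos hb) : 0 < b * Real.log b)
  calc (1 - δ) * (b - a) * (b * Real.log b)
      = (b - a) * ((1 - δ) * (b * Real.log b)) := by ring
    _ ≤ (b - a) * (a * Real.log a * (1 - c / Real.log a)) :=
      mul_le_mul_of_nonneg_left (one_sub_mul_mul_log_le hlog hb.le hba hc hδ hδc) hab'
    _ = a * Real.log a * ((b - a) * (1 - c / Real.log a)) := by ring
    _ ≤ a * Real.log a * (S * (b * Real.log b)) :=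
      mul_le_mul_of_nonneg_left (hθ.trans (theta_sub_theta_le_sum_one_div hab)) hden.le
    _ = S * (a * Real.log a) * (b * Real.log b) := by ring

lemma log_div_log_rpow_le {a b δ : ℝ} (ha : 1 < a) (hab : a ≤ b) (hδ0 : 0 ≤ δ) (hδ1 : δ ≤ 1) :
    (Real.log b / Real.log a) ^ δ ≤ 1 + δ * ((b - a) / (a * Real.log a)) := by
  have hlog : 0 < Real.log a := Real.log_pos ha
  have ha0 : 0 < a := by linarith
  have hdiff : Real.log b - Real.log a ≤ b / a - 1 := by
    rw [← Real.log_div (by linarith) ha0.ne']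
    exact Real.log_le_sub_one_of_pos (div_pos (by linarith) ha0)
  have hratio : Real.log b / Real.log a ≤ 1 + (b - a) / (a * Real.log a) := by
    rw [div_le_iff₀ hlog]
    calc Real.log b ≤ Real.log a + (b / a - 1) := by linarith
      _ = (1 + (b - a) / (a * Real.log a)) * Real.log a := by field_simp
  have hb : 0 ≤ Real.log b := Real.log_nonneg (by linarith)
  have hnonneg : 0 ≤ (b - a) / (a * Real.log a) := div_nonneg (by linarith) (by positivity)
  exact (Real.rpow_le_rpow (by positivity) hratio hδ0).trans
    (rpow_one_add_le_one_add_mul_self (by linarith) hδ0 hδ1)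

lemma eventually_const_le_mul_log (c : ℝ) : ∀ᶠ x in atTop, ∀ δ : ℝ,
    Real.log 2 ≤ δ * Real.log (Real.log x) → c ≤ δ * Real.log x := by
  have hlittle := (Real.isLittleO_log_id_atTop.const_mul_left c).bound (Real.log_pos one_lt_two)
  filter_upwards [Real.tendsto_log_atTop.eventually (hlittle.and (eventually_gt_atTop 1))]
    with x ⟨hx, hlog⟩ δ hδ
  rw [id, Real.norm_of_nonneg (by linarith : 0 ≤ Real.log x)] at hx
  refine le_of_mul_le_mul_right ?_ (Real.log_pos hlog)
  calc c * Real.log (Real.log x) ≤ Real.log 2 * Real.log x := (le_abs_self _).trans hx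
    _ ≤ δ * Real.log (Real.log x) * Real.log x := by gcongr
    _ = δ * Real.log x * Real.log (Real.log x) := by ring

lemma eventually_log_div_log_rpow_le_prod (D : ℕ) : ∀ᶠ a : ℕ in atTop, ∀ b : ℕ,
    (a : ℝ) + a / Real.log a ^ D ≤ b → (b : ℝ) ≤ a * (1 + 1 / Real.log a) → ∀ δ : ℝ, δ ≤ 1 →
      Real.log 2 ≤ δ * Real.log (Real.log a) →
        (Real.log b / Real.log a) ^ (1 - δ) ≤
          ∏ p ∈ (Finset.Ioc a b).filter Nat.Prime, (1 + 1 / (p : ℝ)) := by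
  obtain ⟨C, hC, hθ⟩ := exists_eventually_le_theta_sub_theta D
  have heventually := hθ.and ((eventually_const_le_mul_log (3 + C)).and
    (Real.tendsto_log_atTop.eventually_ge_atTop 1))
  filter_upwards [tendsto_natCast_atTop_atTop.eventually heventually, eventually_gt_atTop 1]
    with a ⟨hθa, hδ_large, hlog⟩ ha b hab hba δ hδ1 hδ
  have ha0 : (1 : ℝ) < a := mod_cast ha
  have hab' : (a : ℝ) ≤ b := by
    have : 0 ≤ a / Real.log a ^ D := by positivity
    linarith
  have hb2 : (b : ℝ) ≤ 2 * a := by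
    have : 1 / Real.log a ≤ 1 := (div_le_one (by linarith)).2 hlog
    nlinarith
  have hsum := one_sub_mul_div_le_sum_one_div hlog (mod_cast hab') hba hC hδ1 (hδ_large δ hδ)
    (hθa b hab hb2)
  have hδ0 : 0 ≤ δ := by
    have h2 := Real.log_pos one_lt_two
    have := Real.log_nonneg hlog
    by_contra! hneg
    nlinarith
  calc (Real.log b / Real.log a) ^ (1 - δ)
      ≤ 1 + (1 - δ) * ((b - a) / (a * Real.log a)) :=
        log_div_log_rpow_le ha0 hab' (by linarith) (by linarith)
    _ ≤ 1 + ∑ p ∈ (Finset.Ioc a b).filter Nat.Prime, 1 / (p : ℝ) := by gcongr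
    _ ≤ _ := one_add_sum_le_prod_one_add _ fun p _ ↦ by positivity

end ShortIntervals

section TestPointGaps

variable {u v : ℝ}

lemma log_floor_exp_le (hu : 0 ≤ u) : Real.log ⌊Real.exp u⌋₊ ≤ u := by
  have hfloor : (0 : ℝ) < ⌊Real.exp u⌋₊ := mod_cast Nat.floor_pos.2 (Real.one_le_exp hu)
  rw [Real.log_le_iff_le_exp hfloor]
  exact Nat.floor_le (Real.exp_pos u).le

lemma half_le_log_floor_exp (hu : 2 ≤ u) : u / 2 ≤ Real.log ⌊Real.exp u⌋₊ := by
  have hfloor : (0 : ℝ) < ⌊Real.exp u⌋₊ :=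
    mod_cast Nat.floor_pos.2 (Real.one_le_exp (by linarith))
  have hsq : Real.exp u = Real.exp (u / 2) * Real.exp (u / 2) := by
    rw [← Real.exp_add, add_halves]
  rw [Real.le_log_iff_exp_le hfloor]
  nlinarith [Real.add_one_le_exp (u / 2), Nat.sub_one_lt_floor (Real.exp u)]

lemma floor_exp_add_div_log_pow_le {D : ℕ} (hu : 2 ≤ u) (hD : (u / 2) ^ D ≤ Real.exp u)
    (huv : 2 ≤ (v - u) * (u / 2) ^ D) :
    (⌊Real.exp u⌋₊ : ℝ) + ⌊Real.exp u⌋₊ / Real.log ⌊Real.exp u⌋₊ ^ D ≤ ⌊Real.exp v⌋₊ := by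
  have hfloor : (⌊Real.exp u⌋₊ : ℝ) ≤ Real.exp u := Nat.floor_le (Real.exp_pos u).le
  set r := (u / 2) ^ D
  have hr : 0 < r := by positivity
  have hterm : ⌊Real.exp u⌋₊ / Real.log ⌊Real.exp u⌋₊ ^ D ≤ Real.exp u / r := by
    gcongr
    exact pow_le_pow_left₀ (by linarith) (half_le_log_floor_exp hu) D
  have hone : 1 ≤ Real.exp u / r := (one_le_div hr).2 hD
  have hexp : Real.exp u + 2 * (Real.exp u / r) ≤ Real.exp v := by
    calc Real.exp u + 2 * (Real.exp u / r) = Real.exp u * (1 + 2 / r) := by ring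
      _ ≤ Real.exp u * Real.exp (v - u) := by
        gcongr
        linarith [Real.add_one_le_exp (v - u), (div_le_iff₀ hr).2 huv]
      _ = Real.exp v := by rw [← Real.exp_add, add_sub_cancel]
  linarith [Nat.sub_one_lt_floor (Real.exp v)]

lemma floor_exp_le_mul_one_add (hu : 2 ≤ u) (hexp : 4 * u ≤ Real.exp u) (huv : u ≤ v)
    (hvu : v - u ≤ 1 / (4 * u)) :
    (⌊Real.exp v⌋₊ : ℝ) ≤ ⌊Real.exp u⌋₊ * (1 + 1 / Real.log ⌊Real.exp u⌋₊) := by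
  have hu0 : 0 < u := by linarith
  have hlog : 0 < Real.log ⌊Real.exp u⌋₊ := by linarith [half_le_log_floor_exp hu]
  have hsmall : 1 / (4 * u) ≤ 1 := (div_le_one (by positivity)).2 (by linarith)
  have hgrowth : Real.exp (v - u) ≤ 1 + 1 / (2 * u) := by
    have hbound := Real.abs_exp_sub_one_le (x := v - u)
      (by rw [abs_of_nonneg (by linarith)]; linarith)
    rw [abs_of_nonneg (by linarith : 0 ≤ v - u)] at hbound
    have : 2 * (1 / (4 * u)) = 1 / (2 * u) := by field_simp; norm_num
    linarith [le_abs_self (Real.exp (v - u) - 1)]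
  calc (⌊Real.exp v⌋₊ : ℝ) ≤ Real.exp u * Real.exp (v - u) := by
        rw [← Real.exp_add, add_sub_cancel]
        exact Nat.floor_le (Real.exp_pos v).le
    _ ≤ Real.exp u * (1 + 1 / (2 * u)) := by gcongr
    _ ≤ (Real.exp u - 1) * (1 + 1 / u) := by
      field_simp
      linarith
    _ ≤ ⌊Real.exp u⌋₊ * (1 + 1 / Real.log ⌊Real.exp u⌋₊) := by
      have := log_floor_exp_le hu0.le
      have := Nat.sub_one_lt_floor (Real.exp u)
      gcongr

variable {ε x : ℝ}

lemma add_one_rpow_sub_rpow_le (hε : 0 ≤ ε) (hε1 : ε ≤ 1) (hx : 0 < x) :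
    (x + 1) ^ ε - x ^ ε ≤ ε * x ^ ε / x := by
  have hbernoulli : (1 + 1 / x) ^ ε ≤ 1 + ε * (1 / x) :=
    rpow_one_add_le_one_add_mul_self (by linarith [one_div_pos.2 hx]) hε hε1
  have hfactor : x + 1 = x * (1 + 1 / x) := by field_simp
  rw [hfactor, Real.mul_rpow hx.le (by positivity)]
  linarith [mul_le_mul_of_nonneg_left hbernoulli (Real.rpow_nonneg hx.le ε),
    (by ring : x ^ ε * (1 + ε * (1 / x)) = x ^ ε + ε * x ^ ε / x)]

lemma le_add_one_rpow_sub_rpow (hε : 0 ≤ ε) (hε1 : ε ≤ 1) (hx : 0 ≤ x) :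
    ε / (x + 1) ≤ (x + 1) ^ ε - x ^ ε := by
  have hx1 : 0 < x + 1 := by linarith
  have hinv : 1 / (x + 1) ≤ 1 := (div_le_one hx1).2 (by linarith)
  have hbernoulli : (1 + -(1 / (x + 1))) ^ ε ≤ 1 + ε * -(1 / (x + 1)) :=
    rpow_one_add_le_one_add_mul_self (by linarith) hε hε1
  have hfactor : x = (x + 1) * (1 + -(1 / (x + 1))) := by field_simp; ring
  have hone : 1 ≤ (x + 1) ^ ε := Real.one_le_rpow (by linarith) hε
  have hmul : x ^ ε ≤ (x + 1) ^ ε * (1 - ε / (x + 1)) := by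
    conv_lhs => rw [hfactor, Real.mul_rpow hx1.le (by linarith)]
    gcongr
    exact hbernoulli.trans_eq (by ring)
  nlinarith [div_nonneg hε hx1.le]

lemma eventually_testPoint_add_div_log_pow_le (hε : 0 < ε) (hε1 : ε ≤ 1) {D : ℕ}
    (hD : 2 / ε ≤ D) :
    ∀ᶠ i : ℕ in atTop, (testPoint ε i : ℝ) + testPoint ε i / Real.log (testPoint ε i) ^ D ≤
      testPoint ε (i + 1) := by
  have hlarge : ∀ᶠ u : ℝ in atTop, (u / 2) ^ D ≤ Real.exp u ∧ 2 ≤ u := by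
    refine .and ?_ (eventually_ge_atTop 2)
    filter_upwards [(Real.tendsto_exp_div_pow_atTop D).eventually_ge_atTop 1,
      eventually_gt_atTop 0] with u hu hu0
    rw [one_le_div (by positivity)] at hu
    exact (pow_le_pow_left₀ (by positivity) (half_le_self hu0.le) D).trans hu
  have hpow := (tendsto_rpow_atTop hε).comp (tendsto_natCast_atTop_atTop (R := ℝ))
  filter_upwards [hpow.eventually hlarge, eventually_ge_atTop 1,
    tendsto_natCast_atTop_atTop.eventually_ge_atTop (4 * 2 ^ D / ε)] with i ⟨hexp, hu⟩ hi1 hi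
  have hi1' : (1 : ℝ) ≤ i := mod_cast hi1
  have hsq : (i : ℝ) ^ 2 ≤ ((i : ℝ) ^ ε) ^ D := by
    rw [← Real.rpow_natCast, ← Real.rpow_natCast, ← Real.rpow_mul (by linarith)]
    exact Real.rpow_le_rpow_of_exponent_le hi1' (by rw [div_le_iff₀' hε] at hD; exact_mod_cast hD)
  have hgap : 2 ≤ (((i : ℝ) + 1) ^ ε - (i : ℝ) ^ ε) * ((i : ℝ) ^ ε / 2) ^ D := by
    calc 2 ≤ ε / (2 * i) * (i ^ 2 / 2 ^ D) := by
          rw [div_le_iff₀ hε] at hi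
          field_simp
          linarith
      _ ≤ ε / (i + 1) * (((i : ℝ) ^ ε) ^ D / 2 ^ D) := by gcongr; linarith
      _ ≤ (((i : ℝ) + 1) ^ ε - (i : ℝ) ^ ε) * ((i : ℝ) ^ ε / 2) ^ D := by
        rw [← div_pow]
        gcongr
        exact le_add_one_rpow_sub_rpow hε.le hε1 (by linarith)
  simpa only [testPoint, Nat.cast_add_one, Function.comp_apply] using
    floor_exp_add_div_log_pow_le hu hexp hgap

lemma eventually_testPoint_le_mul_one_add (hε : 0 < ε) (hε2 : ε < 1 / 2) :
    ∀ᶠ i : ℕ in atTop, (testPoint ε (i + 1) : ℝ) ≤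
      testPoint ε i * (1 + 1 / Real.log (testPoint ε i)) := by
  have hlarge : ∀ᶠ u : ℝ in atTop, 4 * u ≤ Real.exp u ∧ 2 ≤ u := by
    refine .and ?_ (eventually_ge_atTop 2)
    filter_upwards [(Real.tendsto_exp_div_pow_atTop 1).eventually_ge_atTop 4,
      eventually_gt_atTop 0] with u hu hu0
    rwa [pow_one, le_div_iff₀ hu0] at hu
  have hpow := (tendsto_rpow_atTop hε).comp (tendsto_natCast_atTop_atTop (R := ℝ))
  have hpow' := (tendsto_rpow_atTop (by linarith : 0 < 1 - 2 * ε)).comp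
    (tendsto_natCast_atTop_atTop (R := ℝ))
  filter_upwards [hpow.eventually hlarge, eventually_gt_atTop 0,
    hpow'.eventually_ge_atTop 4] with i ⟨hexp, hu⟩ hi hi4
  have hi0 : (0 : ℝ) < i := mod_cast hi
  have hsq : 4 * (i : ℝ) ^ ε * (i : ℝ) ^ ε ≤ i := by
    calc 4 * (i : ℝ) ^ ε * (i : ℝ) ^ ε
        ≤ (i : ℝ) ^ (1 - 2 * ε) * (i : ℝ) ^ ε * (i : ℝ) ^ ε := by gcongr; exact hi4
      _ = i := by
        rw [← Real.rpow_add hi0, ← Real.rpow_add hi0]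
        ring_nf
        exact Real.rpow_one _
  have hgap : ((i : ℝ) + 1) ^ ε - (i : ℝ) ^ ε ≤ 1 / (4 * (i : ℝ) ^ ε) := by
    refine (add_one_rpow_sub_rpow_le hε.le (by linarith) hi0).trans ?_
    rw [div_le_div_iff₀ hi0 (by positivity)]
    nlinarith
  have hmono : (i : ℝ) ^ ε ≤ ((i : ℝ) + 1) ^ ε := by gcongr; linarith
  simpa only [testPoint, Nat.cast_add_one, Function.comp_apply] using
    floor_exp_le_mul_one_add hu hexp hmono hgap

lemma monotone_testPoint (hε : 0 ≤ ε) : Monotone (testPoint ε) := fun i j hij ↦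
  Nat.floor_mono <| Real.exp_le_exp.2 <| by gcongr

lemma tendsto_testPoint_atTop (hε : 0 < ε) : Tendsto (testPoint ε) atTop atTop :=
  tendsto_nat_floor_atTop.comp <| Real.tendsto_exp_atTop.comp <|
    (tendsto_rpow_atTop hε).comp tendsto_natCast_atTop_atTop

end TestPointGaps

section EulerProductEnergy

variable {Ω : Type*} {f : Ω → ℕ → ℝ} {N : ℕ} {ω : Ω}

/-- The integrand `|S_N(1/2+it)|² / |1/2+it|²` of the random variables `Y`. -/
def energyDensity (f : Ω → ℕ → ℝ) (N : ℕ) (ω : Ω) (t : ℝ) : ℝ :=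
  ‖eulerProd f ω N t‖ ^ 2 / ‖(1 / 2 : ℂ) + (t : ℂ) * Complex.I‖ ^ 2

/-- The random variable `Y` without its deterministic normalizing factor. -/
def energy (f : Ω → ℕ → ℝ) (N : ℕ) (ω : Ω) : ℝ :=
  ∫ t : ℝ, energyDensity f N ω t

lemma energy_nonneg : 0 ≤ energy f N ω :=
  integral_nonneg fun _ ↦ by unfold energyDensity; positivity

lemma eulerProd_add_one (t : ℝ) :
    eulerProd f ω (N + 1 : ℕ) t = eulerProd f ω N t *
      if (N + 1).Prime then
        1 + (f ω (N + 1) : ℂ) * ((N + 1 : ℕ) : ℂ) ^ (-(1 / 2 : ℂ) - (t : ℂ) * Complex.I)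
      else 1 := by
  simp only [eulerProd, Nat.floor_natCast, Finset.prod_filter]
  exact Finset.prod_Icc_succ_top (Nat.le_add_left 1 N) _

lemma sq_norm_natCast_cpow_neg_half_sub {n : ℕ} (hn : 0 < n) (t : ℝ) :
    ‖(n : ℂ) ^ (-(1 / 2 : ℂ) - (t : ℂ) * Complex.I)‖ ^ 2 = 1 / n := by
  have hre : (-(1 / 2 : ℂ) - (t : ℂ) * Complex.I).re * ((2 : ℕ) : ℝ) = -1 := by simp
  rw [Complex.norm_natCast_cpow_of_pos hn, ← Real.rpow_natCast, ← Real.rpow_mul (by positivity),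
    hre, Real.rpow_neg_one, one_div]

lemma norm_eulerProd_le (hω : ∀ p : ℕ, p.Prime → |f ω p| ≤ 1) (t : ℝ) :
    ‖eulerProd f ω N t‖ ≤ 2 ^ N := by
  have hfactor : ∀ p : ℕ, p.Prime →
      ‖1 + (f ω p : ℂ) * (p : ℂ) ^ (-(1 / 2 : ℂ) - (t : ℂ) * Complex.I)‖ ≤ 2 := by
    intro p hp
    have hinv : 1 / (p : ℝ) ≤ 1 := (div_le_one (mod_cast hp.pos)).2 (mod_cast hp.one_le)
    have hpow : ‖(p : ℂ) ^ (-(1 / 2 : ℂ) - (t : ℂ) * Complex.I)‖ ≤ 1 :=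
      (sq_le_one_iff₀ (norm_nonneg _)).1
        ((sq_norm_natCast_cpow_neg_half_sub hp.pos t).trans_le hinv)
    calc _ ≤ 1 + |f ω p| * ‖(p : ℂ) ^ (-(1 / 2 : ℂ) - (t : ℂ) * Complex.I)‖ := by
          simpa using norm_add_le (1 : ℂ) (f ω p * (p : ℂ) ^ (-(1 / 2 : ℂ) - t * Complex.I))
      _ ≤ 1 + 1 * 1 := by gcongr; exact hω p hp
      _ = 2 := by norm_num
  have hcard : ((Finset.Icc 1 N).filter Nat.Prime).card ≤ N := by
    simpa using Finset.card_filter_le (Finset.Icc 1 N) Nat.Prime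
  rw [eulerProd, Nat.floor_natCast, norm_prod]
  calc _ ≤ ∏ _p ∈ (Finset.Icc 1 N).filter Nat.Prime, (2 : ℝ) :=
        Finset.prod_le_prod (fun _ _ ↦ norm_nonneg _)
          fun p hp ↦ hfactor p (Finset.mem_filter.1 hp).2
    _ ≤ 2 ^ N := by
      rw [Finset.prod_const]
      exact pow_le_pow_right₀ one_le_two hcard

lemma energyDensity_le (hω : ∀ p : ℕ, p.Prime → |f ω p| ≤ 1) (t : ℝ) :
    energyDensity f N ω t ≤ (2 ^ N) ^ 2 * (4 * (1 + t ^ 2)⁻¹) := by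
  have hden : ‖(1 / 2 : ℂ) + (t : ℂ) * Complex.I‖ ^ 2 = 1 / 4 + t ^ 2 := by
    rw [← Complex.normSq_eq_norm_sq, show (1 / 2 : ℂ) = (1 / 2 : ℝ) by norm_num,
      Complex.normSq_add_mul_I]
    norm_num
  have hinv : (1 / 4 + t ^ 2)⁻¹ ≤ 4 * (1 + t ^ 2)⁻¹ := by
    rw [← div_eq_mul_inv, inv_eq_one_div, div_le_div_iff₀ (by positivity) (by positivity)]
    nlinarith [sq_nonneg t]
  rw [energyDensity, hden, div_eq_mul_inv]
  gcongr
  exact norm_eulerProd_le hω t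

variable [MeasurableSpace Ω]

lemma measurable_eulerProd (hf : ∀ p : ℕ, p.Prime → p ≤ N → Measurable (f · p)) :
    Measurable fun z : Ω × ℝ ↦ eulerProd f z.1 N z.2 := by
  unfold eulerProd
  refine Finset.measurable_fun_prod _ fun p hp ↦ ?_
  rw [Nat.floor_natCast, Finset.mem_filter, Finset.mem_Icc] at hp
  have hfp : Measurable fun z : Ω × ℝ ↦ f z.1 p := (hf p hp.2 hp.1.2).comp measurable_fst
  have hpow : Continuous fun t : ℝ ↦ (p : ℂ) ^ (-(1 / 2 : ℂ) - (t : ℂ) * Complex.I) :=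
    Continuous.const_cpow (by fun_prop) (Or.inl (mod_cast hp.2.ne_zero))
  exact measurable_const.add
    ((Complex.measurable_ofReal.comp hfp).mul (hpow.measurable.comp measurable_snd))

lemma measurable_sq_norm_eulerProd (hf : ∀ p : ℕ, p.Prime → p ≤ N → Measurable (f · p)) (t : ℝ) :
    Measurable fun ω ↦ ‖eulerProd f ω N t‖ ^ 2 :=
  ((measurable_eulerProd hf).comp measurable_prodMk_right).norm.pow_const 2

lemma measurable_energyDensity (hf : ∀ p : ℕ, p.Prime → p ≤ N → Measurable (f · p)) :
    Measurable (Function.uncurry (energyDensity f N)) :=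
  ((measurable_eulerProd hf).norm.pow_const 2).div (by fun_prop)

lemma measurable_energy (hf : ∀ p : ℕ, p.Prime → p ≤ N → Measurable (f · p)) :
    Measurable (energy f N) :=
  (measurable_energyDensity hf).stronglyMeasurable.integral_prod_right.measurable

end EulerProductEnergy

namespace IsRademacherRMF

variable {Ω : Type*} [mΩ : MeasurableSpace Ω] {μ : Measure Ω} {f : Ω → ℕ → ℝ} {p : ℕ}

/-- The filtration whose `N`-th term is generated by the values `f(p)` at the primes `p ≤ N`;
`sigmaAlgTest f ε i` is its term of index `x_i`. -/
def primeFiltration (hf : IsRademacherRMF μ f) : Filtration ℕ mΩ where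
  seq N := ⨆ p ∈ {p : ℕ | p.Prime ∧ p ≤ N}, MeasurableSpace.comap (f · p) inferInstance
  mono' _ _ hNM := biSup_mono fun _ hp ↦ ⟨hp.1, hp.2.trans hNM⟩
  le' _ := iSup₂_le fun p _ ↦ (hf.meas p).comap_le

lemma measurable_primeFiltration (hf : IsRademacherRMF μ f) {N : ℕ} (hp : p.Prime) (hpN : p ≤ N) :
    Measurable[hf.primeFiltration N] (f · p) :=
  (comap_measurable _).mono (le_iSup₂_of_le p ⟨hp, hpN⟩ le_rfl) le_rfl

lemma measurable_energy_primeFiltration (hf : IsRademacherRMF μ f) {N : ℕ} :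
    Measurable[hf.primeFiltration N] (energy f N) :=
  @measurable_energy _ _ _ (hf.primeFiltration N) fun _ ↦ hf.measurable_primeFiltration

lemma indep_primeFiltration (hf : IsRademacherRMF μ f) {N : ℕ} (hp : p.Prime) (hNp : N < p) :
    Indep (hf.primeFiltration N) (MeasurableSpace.comap (f · p) inferInstance) μ := by
  have hdisj : Disjoint {q : Nat.Primes | (q : ℕ) ≤ N} {⟨p, hp⟩} :=
    Set.disjoint_singleton_right.2 hNp.not_ge
  refine indep_of_indep_of_le_left (indep_of_indep_of_le_right
    (indep_iSup_of_disjoint (fun q : Nat.Primes ↦ (hf.meas q).comap_le) hf.indep.iIndep hdisj)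
    ?_) ?_
  · exact le_iSup₂_of_le (⟨p, hp⟩ : Nat.Primes) rfl le_rfl
  · exact iSup₂_le fun q hq ↦ le_iSup₂_of_le (⟨q, hq.1⟩ : Nat.Primes) hq.2 le_rfl

variable [IsProbabilityMeasure μ]

lemma ae_eq_one_or_eq_neg_one (hf : IsRademacherRMF μ f) (hp : p.Prime) :
    ∀ᵐ ω ∂μ, f ω p = 1 ∨ f ω p = -1 := by
  have hpos : MeasurableSet {ω | f ω p = 1} := hf.meas p (measurableSet_singleton 1)
  have hneg : MeasurableSet {ω | f ω p = -1} := hf.meas p (measurableSet_singleton (-1))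
  have hdisj : Disjoint {ω | f ω p = 1} {ω | f ω p = -1} :=
    Set.disjoint_left.2 fun ω (h : f ω p = 1) (h' : f ω p = -1) ↦ by linarith
  have hunion : μ ({ω | f ω p = 1} ∪ {ω | f ω p = -1}) = 1 := by
    rw [measure_union hdisj hneg, hf.prob_one p hp, hf.prob_neg_one p hp]
    exact ENNReal.add_halves 1
  exact (prob_compl_eq_zero_iff (hpos.union hneg)).2 hunion

lemma integrable_prime (hf : IsRademacherRMF μ f) (hp : p.Prime) : Integrable (f · p) μ := by
  refine .of_bound (hf.meas p).aestronglyMeasurable 1 ?_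
  filter_upwards [hf.ae_eq_one_or_eq_neg_one hp] with ω hω
  rcases hω with h | h <;> simp [h]

lemma integral_prime_eq_zero (hf : IsRademacherRMF μ f) (hp : p.Prime) : ∫ ω, f ω p ∂μ = 0 := by
  have hpos : MeasurableSet {ω | f ω p = 1} := hf.meas p (measurableSet_singleton 1)
  have hneg : MeasurableSet {ω | f ω p = -1} := hf.meas p (measurableSet_singleton (-1))
  have hae : (f · p) =ᵐ[μ] fun ω ↦
      {ω | f ω p = 1}.indicator (fun _ ↦ (1 : ℝ)) ω -
        {ω | f ω p = -1}.indicator (fun _ ↦ (1 : ℝ)) ω := by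
    filter_upwards [hf.ae_eq_one_or_eq_neg_one hp] with ω hω
    rcases hω with h | h <;> norm_num [Set.indicator, h]
  rw [integral_congr_ae hae, integral_sub ((integrable_const _).indicator hpos)
    ((integrable_const _).indicator hneg), integral_indicator_const _ hpos,
    integral_indicator_const _ hneg, Measure.real, Measure.real, hf.prob_one p hp,
    hf.prob_neg_one p hp, sub_self]

lemma integral_sq_norm_one_add_mul (hf : IsRademacherRMF μ f) (hp : p.Prime) (w : ℂ) :
    ∫ ω, ‖1 + (f ω p : ℂ) * w‖ ^ 2 ∂μ = 1 + ‖w‖ ^ 2 := by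
  have hae : (fun ω ↦ ‖1 + (f ω p : ℂ) * w‖ ^ 2) =ᵐ[μ]
      fun ω ↦ (1 + ‖w‖ ^ 2) + f ω p * (2 * w.re) := by
    filter_upwards [hf.ae_eq_one_or_eq_neg_one hp] with ω hω
    simp only [← Complex.normSq_eq_norm_sq, Complex.normSq_apply]
    rcases hω with h | h <;> simp [h] <;> ring
  rw [integral_congr_ae hae,
    integral_add (integrable_const _) ((hf.integrable_prime hp).mul_const _),
    integral_mul_const, hf.integral_prime_eq_zero hp]
  simp

lemma setIntegral_sq_norm_eulerProd_mul (hf : IsRademacherRMF μ f) {N : ℕ} {A : Set Ω}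
    (hA : MeasurableSet[hf.primeFiltration N] A) (hp : p.Prime) (hNp : N < p) (t : ℝ) (w : ℂ) :
    ∫ ω in A, ‖eulerProd f ω N t * (1 + (f ω p : ℂ) * w)‖ ^ 2 ∂μ =
      (1 + ‖w‖ ^ 2) * ∫ ω in A, ‖eulerProd f ω N t‖ ^ 2 ∂μ := by
  have hle := hf.primeFiltration.le N
  have hsq : Measurable[hf.primeFiltration N] fun ω ↦ ‖eulerProd f ω N t‖ ^ 2 :=
    @measurable_sq_norm_eulerProd _ _ _ (hf.primeFiltration N)
      (fun _ ↦ hf.measurable_primeFiltration) t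
  set U : Ω → ℝ := A.indicator fun ω ↦ ‖eulerProd f ω N t‖ ^ 2
  set V : Ω → ℝ := fun ω ↦ ‖1 + (f ω p : ℂ) * w‖ ^ 2
  have hU : Measurable[hf.primeFiltration N] U := hsq.indicator hA
  have hV : Measurable[MeasurableSpace.comap (f · p) inferInstance] V :=
    (by fun_prop : Measurable fun x : ℝ ↦ ‖1 + (x : ℂ) * w‖ ^ 2).comp (comap_measurable _)
  have hUV : IndepFun U V μ := by
    rw [IndepFun_iff_Indep]
    exact indep_of_indep_of_le_left (indep_of_indep_of_le_right
      (hf.indep_primeFiltration hp hNp) hV.comap_le) hU.comap_le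
  have hmul : (A.indicator fun ω ↦ ‖eulerProd f ω N t * (1 + (f ω p : ℂ) * w)‖ ^ 2) =
      fun ω ↦ U ω * V ω := by
    ext ω
    by_cases h : ω ∈ A <;> simp [U, V, h, mul_pow]
  rw [← integral_indicator (hle _ hA), ← integral_indicator (hle _ hA), hmul,
    hUV.integral_fun_mul_eq_mul_integral (hU.mono hle le_rfl).aestronglyMeasurable
      (hV.mono (hf.meas p).comap_le le_rfl).aestronglyMeasurable,
    hf.integral_sq_norm_one_add_mul hp, mul_comm]

variable {a b : ℕ}

lemma setIntegral_sq_norm_eulerProd (hf : IsRademacherRMF μ f) (hab : a ≤ b) {A : Set Ω}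
    (hA : MeasurableSet[hf.primeFiltration a] A) (t : ℝ) :
    ∫ ω in A, ‖eulerProd f ω b t‖ ^ 2 ∂μ =
      (∏ p ∈ (Finset.Ioc a b).filter Nat.Prime, (1 + 1 / (p : ℝ))) *
        ∫ ω in A, ‖eulerProd f ω a t‖ ^ 2 ∂μ := by
  induction b, hab using Nat.le_induction with
  | base => simp
  | succ b hab ih =>
    have hstep : ∫ ω in A, ‖eulerProd f ω (b + 1 : ℕ) t‖ ^ 2 ∂μ =
        (if (b + 1).Prime then 1 + 1 / ((b + 1 : ℕ) : ℝ) else 1) *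
          ∫ ω in A, ‖eulerProd f ω b t‖ ^ 2 ∂μ := by
      simp_rw [eulerProd_add_one]
      split_ifs with hp
      · rw [hf.setIntegral_sq_norm_eulerProd_mul (hf.primeFiltration.mono hab _ hA) hp
          b.lt_succ_self, sq_norm_natCast_cpow_neg_half_sub hp.pos]
      · simp only [mul_one, one_mul]
    rw [hstep, ih, Finset.prod_filter, Finset.prod_filter, Finset.prod_Ioc_succ_top hab]
    ring

lemma integrable_energyDensity (hf : IsRademacherRMF μ f) (N : ℕ) :
    Integrable (Function.uncurry (energyDensity f N)) (μ.prod volume) := by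
  have hbound : Integrable (fun z : Ω × ℝ ↦ (2 ^ N) ^ 2 * (4 * (1 + z.2 ^ 2)⁻¹))
      (μ.prod volume) :=
    ((integrable_inv_one_add_sq.const_mul 4).comp_snd μ).const_mul _
  have habs : ∀ᵐ ω ∂μ, ∀ p : ℕ, p.Prime → |f ω p| ≤ 1 := by
    simp only [ae_all_iff]
    intro p hp
    filter_upwards [hf.ae_eq_one_or_eq_neg_one hp] with ω hω
    rcases hω with h | h <;> simp [h]
  refine hbound.mono' (measurable_energyDensity fun p _ _ ↦ hf.meas p).aestronglyMeasurable ?_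
  filter_upwards [Measure.quasiMeasurePreserving_fst.ae habs] with z hz
  rw [Real.norm_of_nonneg (by unfold Function.uncurry energyDensity; positivity)]
  exact energyDensity_le hz z.2

lemma integrable_energy (hf : IsRademacherRMF μ f) (N : ℕ) : Integrable (energy f N) μ :=
  (hf.integrable_energyDensity N).integral_prod_left

lemma setIntegral_energy (hf : IsRademacherRMF μ f) (hab : a ≤ b) {A : Set Ω}
    (hA : MeasurableSet[hf.primeFiltration a] A) :
    ∫ ω in A, energy f b ω ∂μ =
      (∏ p ∈ (Finset.Ioc a b).filter Nat.Prime, (1 + 1 / (p : ℝ))) *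
        ∫ ω in A, energy f a ω ∂μ := by
  have hint : ∀ N, Integrable (Function.uncurry (energyDensity f N))
      ((μ.restrict A).prod volume) := by
    intro N
    rw [← Measure.restrict_univ (μ := (volume : Measure ℝ)), Measure.prod_restrict]
    exact (hf.integrable_energyDensity N).restrict
  unfold energy
  rw [integral_integral_swap (hint b), integral_integral_swap (hint a), ← integral_const_mul]
  congr 1 with t
  simp only [energyDensity, integral_div, hf.setIntegral_sq_norm_eulerProd hab hA, mul_div_assoc]

lemma condExp_energy (hf : IsRademacherRMF μ f) (hab : a ≤ b) :
    μ[energy f b|hf.primeFiltration a] =ᵐ[μ]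
      fun ω ↦ (∏ p ∈ (Finset.Ioc a b).filter Nat.Prime, (1 + 1 / (p : ℝ))) * energy f a ω := by
  refine (ae_eq_condExp_of_forall_setIntegral_eq (hf.primeFiltration.le a) (hf.integrable_energy b)
    (fun _ _ _ ↦ ((hf.integrable_energy a).const_mul _).integrableOn) (fun A hA _ ↦ ?_)
    (hf.measurable_energy_primeFiltration.const_mul _).stronglyMeasurable.aestronglyMeasurable).symm
  rw [integral_const_mul, hf.setIntegral_energy hab hA]

end IsRademacherRMF

section Normalization

lemma one_div_mul_div_rpow_le_mul {c x y δ P : ℝ} (hc : 0 < c) (hx : 0 < x) (hy : 0 < y)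
    (hP : (y / x) ^ (1 - δ) ≤ P) : 1 / x * (x / c) ^ δ ≤ 1 / y * (y / c) ^ δ * P := by
  have hyx : 0 < y / x := by positivity
  calc 1 / x * (x / c) ^ δ = 1 / y * (x / c) ^ δ * (y / x) := by field_simp
    _ = 1 / y * ((x / c) ^ δ * (y / x) ^ δ) * (y / x) ^ (1 - δ) := by
      rw [← mul_assoc, mul_assoc _ _ ((y / x) ^ (1 - δ)), ← Real.rpow_add hyx, add_sub_cancel,
        Real.rpow_one]
    _ = 1 / y * (y / c) ^ δ * (y / x) ^ (1 - δ) := by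
      rw [← Real.mul_rpow (by positivity) hyx.le, div_mul_div_comm, mul_comm c x,
        mul_div_mul_left _ _ hx.ne']
    _ ≤ 1 / y * (y / c) ^ δ * P := by gcongr

/-- The deterministic factor multiplying `energy f x_i` in `Ynorm f ε ℓ i`. -/
def normFactor (ε : ℝ) (ℓ i : ℕ) : ℝ :=
  1 / Real.log (testPoint ε i) *
    (Real.log (testPoint ε i) / Real.log (Xpt ε ((ℓ : ℝ) - 1))) ^
      ((1 : ℝ) / ((ℓ : ℝ) - 1) ^ (1 / (4 * ε)))

lemma log_Xpt (ε ℓ : ℝ) : Real.log (Xpt ε ℓ) = 2 ^ ℓ ^ (1 / (4 * ε)) :=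
  Real.log_exp _

lemma normFactor_nonneg (ε : ℝ) (ℓ i : ℕ) : 0 ≤ normFactor ε ℓ i := by
  have := Real.log_natCast_nonneg (testPoint ε i)
  rw [normFactor, log_Xpt]
  positivity

lemma eventually_normFactor_le_mul_prod {ε : ℝ} (hε : 0 < ε) (hε2 : ε < 1 / 2) :
    ∀ᶠ i : ℕ in atTop, ∀ ℓ : ℕ, 2 ≤ ℓ → Xpt ε ((ℓ : ℝ) - 1) < testPoint ε i →
      normFactor ε ℓ i ≤ normFactor ε ℓ (i + 1) *
        ∏ p ∈ (Finset.Ioc (testPoint ε i) (testPoint ε (i + 1))).filter Nat.Prime,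
          (1 + 1 / (p : ℝ)) := by
  have hprod := (tendsto_testPoint_atTop hε).eventually
    (eventually_log_div_log_rpow_le_prod ⌈2 / ε⌉₊)
  filter_upwards [hprod, eventually_testPoint_le_mul_one_add hε hε2,
    eventually_testPoint_add_div_log_pow_le hε (by linarith) (Nat.le_ceil (2 / ε))]
    with i hprod hupper hlower ℓ hℓ hX
  set a := testPoint ε i
  set b := testPoint ε (i + 1)
  have hℓ1 : (1 : ℝ) ≤ (ℓ : ℝ) - 1 := by
    have : (2 : ℝ) ≤ ℓ := mod_cast hℓ
    linarith
  set M := ((ℓ : ℝ) - 1) ^ (1 / (4 * ε))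
  have hM1 : 1 ≤ M := Real.one_le_rpow hℓ1 (by positivity)
  have ha : (0 : ℝ) < a := (Real.exp_pos _).trans hX
  have hloga : 2 ^ M < Real.log a := (Real.lt_log_iff_exp_lt ha).2 hX
  have hloga0 : 0 < Real.log a := lt_trans (by positivity) hloga
  have hlogb0 : 0 < Real.log b :=
    hloga0.trans_le (Real.log_le_log ha ((le_add_of_nonneg_right (by positivity)).trans hlower))
  have hloglog : Real.log 2 ≤ 1 / M * Real.log (Real.log a) := by
    rw [one_div, inv_mul_eq_div, le_div_iff₀' (by linarith), ← Real.log_rpow two_pos]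
    exact Real.log_le_log (by positivity) hloga.le
  rw [normFactor, normFactor, log_Xpt]
  exact one_div_mul_div_rpow_le_mul (by positivity) hloga0 hlogb0
    (hprod b hlower hupper (1 / M) ((div_le_one (by linarith)).2 hM1) hloglog)

end Normalization

section Submartingale

lemma Ynorm_eq_normFactor_smul_energy {Ω : Type*} (f : Ω → ℕ → ℝ) (ε : ℝ) (ℓ i : ℕ) :
    Ynorm f ε ℓ i = normFactor ε ℓ i • energy f (testPoint ε i) :=
  rfl

lemma sigmaAlgTest_eq_primeFiltration {Ω : Type*} [MeasurableSpace Ω] {μ : Measure Ω}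
    {f : Ω → ℕ → ℝ} (hf : IsRademacherRMF μ f) (ε : ℝ) (i : ℕ) :
    sigmaAlgTest f ε i = hf.primeFiltration (testPoint ε i) :=
  rfl

theorem Ynorm_submartingale_general {Ω : Type*} [MeasurableSpace Ω] {μ : Measure Ω}
    [IsProbabilityMeasure μ] {f : Ω → ℕ → ℝ} (hf : IsRademacherRMF μ f) {ε : ℝ} (hε : 0 < ε)
    (hε2 : ε < 1 / 2) :
    ∀ᶠ i : ℕ in atTop, ∀ ℓ : ℕ, 2 ≤ ℓ → Xpt ε ((ℓ : ℝ) - 1) < testPoint ε (i - 1) →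
      (∀ ω, 0 ≤ Ynorm f ε ℓ i ω) ∧
      Measurable[sigmaAlgTest f ε i] (Ynorm f ε ℓ i) ∧
      Integrable (Ynorm f ε ℓ i) μ ∧
      Ynorm f ε ℓ (i - 1) ≤ᵐ[μ] μ[Ynorm f ε ℓ i|sigmaAlgTest f ε (i - 1)] := by
  have hfactor := (tendsto_sub_atTop_nat 1).eventually (eventually_normFactor_le_mul_prod hε hε2)
  filter_upwards [hfactor, eventually_ge_atTop 1] with i hi hi1 ℓ hℓ hX
  rw [Nat.sub_add_cancel hi1] at hi
  rw [Ynorm_eq_normFactor_smul_energy, Ynorm_eq_normFactor_smul_energy,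
    sigmaAlgTest_eq_primeFiltration hf, sigmaAlgTest_eq_primeFiltration hf]
  refine ⟨fun ω ↦ mul_nonneg (normFactor_nonneg ε ℓ i) energy_nonneg,
    hf.measurable_energy_primeFiltration.const_mul _, (hf.integrable_energy _).smul _, ?_⟩
  filter_upwards [condExp_smul (normFactor ε ℓ i) (energy f (testPoint ε i)) _,
    hf.condExp_energy (monotone_testPoint hε.le (Nat.sub_le i 1))] with ω hsmul hcond
  rw [hsmul, Pi.smul_apply, Pi.smul_apply, hcond, smul_eq_mul, smul_eq_mul, ← mul_assoc]
  exact mul_le_mul_of_nonneg_right (hi ℓ hℓ hX) energy_nonneg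

end Submartingale

/-- `(Y_{x_i})` is a nonnegative submartingale along the test points in
`(X_{ℓ-1}, X_ℓ]`, for `i` sufficiently large in terms of `ε`. -/
theorem Ynorm_submartingale
    {Ω : Type*} [MeasurableSpace Ω] (μ : Measure Ω) [IsProbabilityMeasure μ]
    (f : Ω → ℕ → ℝ) (hf : IsRademacherRMF μ f) :
    ∃ ε₀ : ℝ, 0 < ε₀ ∧ ∀ ε : ℝ, 0 < ε → ε < ε₀ →
      ∃ I₀ : ℕ, ∀ ℓ : ℕ, 2 ≤ ℓ → ∀ i : ℕ, I₀ ≤ i → 2 ≤ i →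
        Xpt ε ((ℓ : ℝ) - 1) < (testPoint ε (i - 1) : ℝ) →
        (testPoint ε i : ℝ) ≤ Xpt ε (ℓ : ℝ) →
        (∀ ω, 0 ≤ Ynorm f ε ℓ i ω) ∧
        Measurable[sigmaAlgTest f ε i] (Ynorm f ε ℓ i) ∧
        Integrable (Ynorm f ε ℓ i) μ ∧
        Ynorm f ε ℓ (i - 1) ≤ᵐ[μ] μ[Ynorm f ε ℓ i|sigmaAlgTest f ε (i - 1)] := by
  refine ⟨1 / 2, by norm_num, fun ε hε hε2 ↦ ?_⟩
  obtain ⟨I₀, hI₀⟩ := eventually_atTop.1 (Ynorm_submartingale_general hf hε hε2)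
  exact ⟨I₀, fun ℓ hℓ i hi _ hX _ ↦ hI₀ i hi ℓ hℓ hX⟩
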